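/- Let J(t) = |t| and let g ∈ L¹(ℝⁿ) be nonnegative with g(x) = g₀(|x|) for a strictly decreasing function g₀ on (0,∞) (so g = g^{*n}). Let u, v : ℝⁿ → [0,∞) be nonnegative measurable functions with |{u > τ}| < ∞ and |{v > τ}| < ∞ for all τ > 0 and with ∫_{ℝⁿ}∫_{ℝⁿ} |u(x) − v(y)| g(x−y) dx dy finite. Then equality ∫∫ |u^{*n}(x) − v^{*n}(y)| g(x−y) dx dy = ∫∫ |u(x) − v(y)| g(x−y) dx dy holds if and only if for every τ ∈ (0, min{ess sup u, ess sup v}) there exists z_τ ∈ ℝⁿ such that {u > τ} = {u^{*n} > τ} − z_τ and {v > τ} = {v^{*n} > τ} − z_τ, up to sets of Lebesgue measure zero. -/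

import Mathlib

open MeasureTheory Real

/-- For a measurable set `A ⊂ ℝⁿ` of finite Lebesgue measure, the radius of the open ball
centered at the origin with the same measure as `A`. -/
noncomputable def schwarzRadius (n : ℕ) (A : Set (EuclideanSpace ℝ (Fin n))) : ℝ :=
  ((volume A).toReal / (volume (Metric.ball (0 : EuclideanSpace ℝ (Fin n)) 1)).toReal) ^
    ((n : ℝ)⁻¹)

/-- `A^{*n}`: the open ball in `ℝⁿ` centered at the origin with the same measure as `A`. -/
noncomputable def schwarzSet (n : ℕ) (A : Set (EuclideanSpace ℝ (Fin n))) :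
    Set (EuclideanSpace ℝ (Fin n)) :=
  Metric.ball 0 (schwarzRadius n A)

/-- The Schwarz rearrangement `u^{*n}(x) := ∫₀^∞ χ_{{|u|>t}^{*n}}(x) dt`. -/
noncomputable def schwarzRearr (n : ℕ) (u : EuclideanSpace ℝ (Fin n) → ℝ) :
    EuclideanSpace ℝ (Fin n) → ℝ := fun x =>
  ∫ t in Set.Ioi (0 : ℝ), (schwarzSet n {y | t < |u y|}).indicator (fun _ => (1 : ℝ)) x


namespace Riesz
open Set Filter Topology ENNReal

variable {n : ℕ}

/-- Reflection in the hyperplane `⟪x, e⟫ = s`. -/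
noncomputable def sg (e : EuclideanSpace ℝ (Fin n)) (s : ℝ) (x : EuclideanSpace ℝ (Fin n)) :
    EuclideanSpace ℝ (Fin n) := x + (2 * (s - inner ℝ x e)) • e

lemma inner_sg {e : EuclideanSpace ℝ (Fin n)} (he : ‖e‖ = 1) (s : ℝ)
    (x : EuclideanSpace ℝ (Fin n)) : inner ℝ (sg e s x) e = 2 * s - inner ℝ x e := by
  unfold sg
  rw [inner_add_left, inner_smul_left, real_inner_self_eq_norm_sq, he]
  simp; ring

lemma sg_sg {e : EuclideanSpace ℝ (Fin n)} (he : ‖e‖ = 1) (s : ℝ)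
    (x : EuclideanSpace ℝ (Fin n)) : sg e s (sg e s x) = x := by
  rw [sg, inner_sg he, sg, add_assoc, ← add_smul]
  have : 2 * (s - inner ℝ x e) + 2 * (s - (2 * s - inner ℝ x e)) = 0 := by ring
  rw [this]; simp

lemma sg_neg (e : EuclideanSpace ℝ (Fin n)) (s : ℝ) : sg (-e) (-s) = sg e s := by
  funext x
  simp only [sg, inner_neg_right, smul_neg, ← neg_smul]
  congr 2; ring

lemma norm_sq_sub_sg {e : EuclideanSpace ℝ (Fin n)} (he : ‖e‖ = 1) (s : ℝ)
    (x y : EuclideanSpace ℝ (Fin n)) :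
    ‖x - sg e s y‖ ^ 2 = ‖x - y‖ ^ 2 + 4 * (s - inner ℝ x e) * (s - inner ℝ y e) := by
  have : x - sg e s y = (x - y) - (2 * (s - inner ℝ y e)) • e := by
    simp [sg, sub_sub]
  rw [this, norm_sub_sq_real, norm_smul, he, inner_smul_right, inner_sub_left]
  rw [mul_one, Real.norm_eq_abs, sq_abs]; ring

lemma norm_sq_sg {e : EuclideanSpace ℝ (Fin n)} (he : ‖e‖ = 1) (s : ℝ)
    (y : EuclideanSpace ℝ (Fin n)) :
    ‖sg e s y‖ ^ 2 = ‖y‖ ^ 2 + 4 * s * (s - inner ℝ y e) := by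
  have := norm_sq_sub_sg he s 0 y
  simpa using this

lemma norm_sg_sub_sg {e : EuclideanSpace ℝ (Fin n)} (he : ‖e‖ = 1) (s : ℝ)
    (x y : EuclideanSpace ℝ (Fin n)) : ‖sg e s x - sg e s y‖ = ‖x - y‖ := by
  have h := norm_sq_sub_sg he s (sg e s x) y
  have h2 := norm_sq_sub_sg he s y x
  rw [norm_sub_rev (sg e s x) y, h2, inner_sg he, norm_sub_rev y x] at h
  have : ‖sg e s x - sg e s y‖ ^ 2 = ‖x - y‖ ^ 2 := by rw [h]; ring
  exact (sq_eq_sq₀ (norm_nonneg _) (norm_nonneg _)).1 this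

lemma norm_sub_sg_comm {e : EuclideanSpace ℝ (Fin n)} (he : ‖e‖ = 1) (s : ℝ)
    (x y : EuclideanSpace ℝ (Fin n)) : ‖sg e s x - y‖ = ‖x - sg e s y‖ := by
  conv_lhs => rw [← sg_sg he s y]
  exact norm_sg_sub_sg he s _ _

lemma sg_isometry {e : EuclideanSpace ℝ (Fin n)} (he : ‖e‖ = 1) (s : ℝ) :
    Isometry (sg e s) := by
  refine Isometry.of_dist_eq fun x y => ?_
  rw [dist_eq_norm, dist_eq_norm, norm_sg_sub_sg he]

lemma sg_measurable (e : EuclideanSpace ℝ (Fin n)) (s : ℝ) : Measurable (sg e s) := by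
  unfold sg; fun_prop

lemma sg_mp {e : EuclideanSpace ℝ (Fin n)} (he : ‖e‖ = 1) (s : ℝ) :
    MeasurePreserving (sg e s) (volume : Measure (EuclideanSpace ℝ (Fin n))) volume := by
  let f : EuclideanSpace ℝ (Fin n) → EuclideanSpace ℝ (Fin n) := sg e 0
  have hlin : IsLinearMap ℝ f := by
    constructor
    · intro x y; simp only [f, sg, inner_add_left]; module
    · intro c x; simp only [f, sg, inner_smul_left]; simp; module
  let L : EuclideanSpace ℝ (Fin n) ≃ₗ[ℝ] EuclideanSpace ℝ (Fin n) :=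
    { hlin.mk' f with
      invFun := f
      left_inv := fun x => sg_sg he 0 x
      right_inv := fun x => sg_sg he 0 x }
  have hnorm : ∀ x, ‖sg e 0 x‖ = ‖x‖ := by
    intro x
    have : ‖sg e 0 x‖ ^ 2 = ‖x‖ ^ 2 := by rw [norm_sq_sg he]; ring
    exact (sq_eq_sq₀ (norm_nonneg _) (norm_nonneg _)).1 this
  let I : EuclideanSpace ℝ (Fin n) ≃ₗᵢ[ℝ] EuclideanSpace ℝ (Fin n) := ⟨L, hnorm⟩
  have h1 : MeasurePreserving (sg e 0) (volume : Measure (EuclideanSpace ℝ (Fin n))) volume :=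
    I.measurePreserving
  have h2 := (measurePreserving_add_right (volume : Measure (EuclideanSpace ℝ (Fin n)))
    ((2 * s) • e)).comp h1
  have : sg e s = (fun x => x + (2 * s) • e) ∘ sg e 0 := by
    funext x; simp only [sg, Function.comp]; module
  rw [this]; exact h2

lemma lintegral_sg {e : EuclideanSpace ℝ (Fin n)} (he : ‖e‖ = 1) (s : ℝ)
    {f : EuclideanSpace ℝ (Fin n) → ℝ≥0∞} (hf : Measurable f) :
    ∫⁻ x, f (sg e s x) = ∫⁻ x, f x :=
  (sg_mp he s).lintegral_comp hf

lemma lintegral_le_of_sum {e : EuclideanSpace ℝ (Fin n)} (he : ‖e‖ = 1) (s : ℝ)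
    {f h : EuclideanSpace ℝ (Fin n) → ℝ≥0∞} (hf : Measurable f) (hh : Measurable h)
    (H : ∀ x, f x + f (sg e s x) ≤ h x + h (sg e s x)) : ∫⁻ x, f x ≤ ∫⁻ x, h x := by
  have h1 : ∫⁻ x, (f x + f (sg e s x)) ≤ ∫⁻ x, (h x + h (sg e s x)) := lintegral_mono H
  rw [lintegral_add_left hf, lintegral_add_left hh, lintegral_sg he s hf, lintegral_sg he s hh,
    ← two_mul, ← two_mul] at h1
  exact (ENNReal.mul_le_mul_iff_right (by simp) (by simp)).1 h1

/-- Polarization. -/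
def Pol (e : EuclideanSpace ℝ (Fin n)) (s : ℝ) (U : Set (EuclideanSpace ℝ (Fin n))) :
    Set (EuclideanSpace ℝ (Fin n)) :=
  {x | (x ∈ U ∧ sg e s x ∈ U) ∨ (inner ℝ x e ≤ s ∧ (x ∈ U ∨ sg e s x ∈ U))}

/-- Points of `U` on the plus side whose reflection is not in `U`. -/
def AA (e : EuclideanSpace ℝ (Fin n)) (s : ℝ) (U : Set (EuclideanSpace ℝ (Fin n))) :
    Set (EuclideanSpace ℝ (Fin n)) :=
  {x | x ∈ U ∧ inner ℝ x e ≤ s ∧ sg e s x ∉ U}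

lemma mhalf (e : EuclideanSpace ℝ (Fin n)) (s : ℝ) :
    MeasurableSet {x : EuclideanSpace ℝ (Fin n) | inner ℝ x e ≤ s} :=
  measurableSet_le (by fun_prop) measurable_const

lemma Pol_meas (e : EuclideanSpace ℝ (Fin n)) (s : ℝ) {U : Set (EuclideanSpace ℝ (Fin n))}
    (hU : MeasurableSet U) : MeasurableSet (Pol e s U) := by
  have h2 : MeasurableSet (sg e s ⁻¹' U) := sg_measurable e s hU
  exact (hU.inter h2).union ((mhalf e s).inter (hU.union h2))

lemma AA_meas (e : EuclideanSpace ℝ (Fin n)) (s : ℝ) {U : Set (EuclideanSpace ℝ (Fin n))}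
    (hU : MeasurableSet U) : MeasurableSet (AA e s U) := by
  have h2 : MeasurableSet (sg e s ⁻¹' U) := sg_measurable e s hU
  exact hU.inter ((mhalf e s).inter h2.compl)

lemma sg_fix {e : EuclideanSpace ℝ (Fin n)} {s : ℝ} {x : EuclideanSpace ℝ (Fin n)}
    (h : inner ℝ x e = s) : sg e s x = x := by
  simp [sg, h]

lemma sg_plus {e : EuclideanSpace ℝ (Fin n)} (he : ‖e‖ = 1) {s : ℝ}
    (x : EuclideanSpace ℝ (Fin n)) : inner ℝ (sg e s x) e ≤ s ↔ s ≤ inner ℝ x e := by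
  rw [inner_sg he]; constructor <;> intro h <;> linarith

lemma mem_Pol_of_le {e : EuclideanSpace ℝ (Fin n)} {s : ℝ}
    {U : Set (EuclideanSpace ℝ (Fin n))} {x : EuclideanSpace ℝ (Fin n)}
    (h : inner ℝ x e ≤ s) : x ∈ Pol e s U ↔ (x ∈ U ∨ sg e s x ∈ U) := by
  simp only [Pol, mem_ofPred_eq]; tauto

lemma sg_mem_Pol_of_le {e : EuclideanSpace ℝ (Fin n)} (he : ‖e‖ = 1) {s : ℝ}
    {U : Set (EuclideanSpace ℝ (Fin n))} {x : EuclideanSpace ℝ (Fin n)}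
    (h : inner ℝ x e ≤ s) : sg e s x ∈ Pol e s U ↔ (x ∈ U ∧ sg e s x ∈ U) := by
  simp only [Pol, mem_ofPred_eq, sg_sg he, sg_plus he]
  constructor
  · rintro (h1 | ⟨h1, h2⟩)
    · tauto
    · have := sg_fix (le_antisymm h h1)
      rw [this] at h2 ⊢; tauto
  · tauto

lemma Pol_vol {e : EuclideanSpace ℝ (Fin n)} (he : ‖e‖ = 1) (s : ℝ)
    {U : Set (EuclideanSpace ℝ (Fin n))} (hU : MeasurableSet U) :
    volume (Pol e s U) = volume U := by
  have key : ∀ x, inner ℝ x e ≤ s → (Pol e s U).indicator (1 : EuclideanSpace ℝ (Fin n) → ℝ≥0∞) x +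
      (Pol e s U).indicator 1 (sg e s x) = U.indicator 1 x + U.indicator 1 (sg e s x) := by
    intro x hx
    have h1 := mem_Pol_of_le (U := U) hx
    have h2 := sg_mem_Pol_of_le he (U := U) hx
    simp only [indicator, h1, h2, Pi.one_apply]
    by_cases a : x ∈ U <;> by_cases b : sg e s x ∈ U <;> simp [a, b, h1, h2]
  have key2 : ∀ x, (Pol e s U).indicator (1 : EuclideanSpace ℝ (Fin n) → ℝ≥0∞) x +
      (Pol e s U).indicator 1 (sg e s x) = U.indicator 1 x + U.indicator 1 (sg e s x) := by
    intro x
    rcases le_total (inner ℝ x e) s with h | h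
    · exact key x h
    · have := key (sg e s x) ((sg_plus he x).2 h)
      rw [sg_sg he] at this
      rw [add_comm, this, add_comm]
  have m1 : Measurable ((Pol e s U).indicator (1 : EuclideanSpace ℝ (Fin n) → ℝ≥0∞)) :=
    measurable_one.indicator (Pol_meas e s hU)
  have m2 : Measurable (U.indicator (1 : EuclideanSpace ℝ (Fin n) → ℝ≥0∞)) := measurable_one.indicator hU
  rw [← lintegral_indicator_one (Pol_meas e s hU), ← lintegral_indicator_one hU]
  exact le_antisymm (lintegral_le_of_sum he s m1 m2 fun x => (key2 x).le)
    (lintegral_le_of_sum he s m2 m1 fun x => (key2 x).ge)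

/-- drop of the distance to a centered ball under polarization -/
lemma Pol_drop {e : EuclideanSpace ℝ (Fin n)} (he : ‖e‖ = 1) {s : ℝ} (hs : 0 < s)
    {U : Set (EuclideanSpace ℝ (Fin n))} (hU : MeasurableSet U) (hfin : volume U ≠ ⊤) (r : ℝ) :
    volume (Pol e s U \ Metric.ball 0 r) +
      volume ((Metric.ball 0 r \ U) ∩ sg e s ⁻¹' (U \ Metric.ball 0 r)) ≤
    volume (U \ Metric.ball 0 r) := by
  set B : Set (EuclideanSpace ℝ (Fin n)) := Metric.ball 0 r with hB
  have hBm : MeasurableSet B := measurableSet_ball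
  set Γ := (B \ U) ∩ sg e s ⁻¹' (U \ B) with hΓ
  have hΓm : MeasurableSet Γ := (hBm.diff hU).inter (sg_measurable e s (hU.diff hBm))
  have hPm := Pol_meas e s hU
  have hmono : ∀ x, inner ℝ x e ≤ s → ‖x‖ ≤ ‖sg e s x‖ := by
    intro x hx
    have := norm_sq_sg he s x
    have h2 : 0 ≤ 4 * s * (s - inner ℝ x e) := mul_nonneg (by linarith) (by linarith)
    exact (sq_le_sq₀ (norm_nonneg _) (norm_nonneg _)).1 (by linarith)
  have key : ∀ x, inner ℝ x e ≤ s → (U ∩ B).indicator (1 : EuclideanSpace ℝ (Fin n) → ℝ≥0∞) x + Γ.indicator 1 x +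
      ((U ∩ B).indicator 1 (sg e s x) + Γ.indicator 1 (sg e s x)) ≤
      (Pol e s U ∩ B).indicator 1 x + (Pol e s U ∩ B).indicator 1 (sg e s x) := by
    intro x hx
    have h1 := mem_Pol_of_le (U := U) hx
    have h2 := sg_mem_Pol_of_le he (U := U) hx
    have h3 : sg e s x ∈ B → x ∈ B := by
      simp only [hB, Metric.mem_ball, dist_zero_right]
      exact fun h => (hmono x hx).trans_lt h
    simp only [indicator, mem_inter_iff, h1, h2, Pi.one_apply, hΓ, mem_preimage, sg_sg he,
      Set.mem_sdiff]
    by_cases a : x ∈ U <;> by_cases b : sg e s x ∈ U <;> by_cases c : x ∈ B <;>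
      by_cases d : sg e s x ∈ B <;> first | exact absurd (h3 d) c | simp [a, b, c, d, h1, h2, hΓ, sg_sg he]
  have key2 : ∀ x, (U ∩ B).indicator (1 : EuclideanSpace ℝ (Fin n) → ℝ≥0∞) x + Γ.indicator 1 x +
      ((U ∩ B).indicator 1 (sg e s x) + Γ.indicator 1 (sg e s x)) ≤
      (Pol e s U ∩ B).indicator 1 x + (Pol e s U ∩ B).indicator 1 (sg e s x) := by
    intro x
    rcases le_total (inner ℝ x e) s with h | h
    · exact key x h
    · have := key (sg e s x) ((sg_plus he x).2 h)
      rw [sg_sg he] at this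
      rw [add_comm, add_comm ((Pol e s U ∩ B).indicator _ _)]; exact this
  have m1 : Measurable ((Pol e s U ∩ B).indicator (1 : EuclideanSpace ℝ (Fin n) → ℝ≥0∞)) :=
    measurable_one.indicator (hPm.inter hBm)
  have m2 : Measurable ((U ∩ B).indicator (1 : EuclideanSpace ℝ (Fin n) → ℝ≥0∞)) :=
    measurable_one.indicator (hU.inter hBm)
  have m3 : Measurable (Γ.indicator (1 : EuclideanSpace ℝ (Fin n) → ℝ≥0∞)) := measurable_one.indicator hΓm
  have h4 := lintegral_le_of_sum he s (m2.add m3) m1 key2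
  simp only [Pi.add_apply] at h4
  rw [lintegral_add_left m2, lintegral_indicator_one (hU.inter hBm),
    lintegral_indicator_one hΓm, lintegral_indicator_one (hPm.inter hBm)] at h4
  have h5 : volume (Pol e s U ∩ B) + volume (Pol e s U \ B) = volume U := by
    rw [measure_inter_add_sdiff _ hBm, Pol_vol he s hU]
  have h6 := measure_inter_add_sdiff (μ := volume) U hBm
  have h7 : volume (U ∩ B) ≠ ⊤ := ne_top_of_le_ne_top hfin (measure_mono inter_subset_left)
  rw [← h6] at h5
  refine (ENNReal.add_le_add_iff_left h7).1 ?_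
  rw [← h5, add_comm (volume (Pol e s U \ B)), ← add_assoc]
  gcongr

lemma Pol_sub {e : EuclideanSpace ℝ (Fin n)} (he : ‖e‖ = 1) {s : ℝ} (hs : 0 < s)
    {U : Set (EuclideanSpace ℝ (Fin n))} {ρ : ℝ} (h : U ⊆ Metric.closedBall 0 ρ) :
    Pol e s U ⊆ Metric.closedBall 0 ρ := by
  rintro x (⟨hx, -⟩ | ⟨hx, hx2 | hx2⟩)
  · exact h hx
  · exact h hx2
  · have h1 := h hx2
    rw [mem_closedBall_zero_iff] at h1 ⊢
    have := norm_sq_sg he s x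
    have h2 : 0 ≤ 4 * s * (s - inner ℝ x e) := mul_nonneg (by linarith) (by linarith)
    exact ((sq_le_sq₀ (norm_nonneg _) (norm_nonneg _)).1 (by linarith)).trans h1

end Riesz


namespace Riesz
open Set Filter Topology ENNReal

variable {n : ℕ}

/-- strictly decreasing radial kernels -/
structure Ker (G : EuclideanSpace ℝ (Fin n) → ℝ≥0∞) : Prop where
  meas : Measurable G
  rad : ∀ x y, ‖x‖ = ‖y‖ → G x = G y
  str : ∀ x y, ‖x‖ < ‖y‖ → G y < G x
  fin : ∫⁻ x, G x ≠ ⊤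

lemma Ker.anti {G : EuclideanSpace ℝ (Fin n) → ℝ≥0∞} (hG : Ker G)
    {x y : EuclideanSpace ℝ (Fin n)} (h : ‖x‖ ≤ ‖y‖) : G y ≤ G x := by
  rcases h.lt_or_eq with h | h
  · exact (hG.str _ _ h).le
  · exact (hG.rad _ _ h).ge

/-- integrand -/
noncomputable def FF (G : EuclideanSpace ℝ (Fin n) → ℝ≥0∞)
    (U V : Set (EuclideanSpace ℝ (Fin n)))
    (p : EuclideanSpace ℝ (Fin n) × EuclideanSpace ℝ (Fin n)) : ℝ≥0∞ :=
  (U ×ˢ V).indicator (fun p => G (p.1 - p.2)) p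

/-- The Riesz functional. -/
noncomputable def RR (G : EuclideanSpace ℝ (Fin n) → ℝ≥0∞)
    (U V : Set (EuclideanSpace ℝ (Fin n))) : ℝ≥0∞ :=
  ∫⁻ p, FF G U V p ∂((volume : Measure (EuclideanSpace ℝ (Fin n))).prod volume)

lemma Ker.meas2 {G : EuclideanSpace ℝ (Fin n) → ℝ≥0∞} (hG : Ker G) :
    Measurable fun p : EuclideanSpace ℝ (Fin n) × EuclideanSpace ℝ (Fin n) => G (p.1 - p.2) :=
  hG.meas.comp (measurable_fst.sub measurable_snd)

lemma FF_meas {G : EuclideanSpace ℝ (Fin n) → ℝ≥0∞} (hG : Ker G)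
    {U V : Set (EuclideanSpace ℝ (Fin n))} (hU : MeasurableSet U) (hV : MeasurableSet V) :
    Measurable (FF G U V) := hG.meas2.indicator (hU.prod hV)

/-- four-fold symmetrized integrand -/
noncomputable def KK (G : EuclideanSpace ℝ (Fin n) → ℝ≥0∞) (e : EuclideanSpace ℝ (Fin n)) (s : ℝ)
    (U V : Set (EuclideanSpace ℝ (Fin n)))
    (p : EuclideanSpace ℝ (Fin n) × EuclideanSpace ℝ (Fin n)) : ℝ≥0∞ :=
  (FF G U V p + FF G U V (sg e s p.1, sg e s p.2)) +
  (FF G U V (p.1, sg e s p.2) + FF G U V (sg e s p.1, p.2))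

lemma KK_meas {G : EuclideanSpace ℝ (Fin n) → ℝ≥0∞} (hG : Ker G)
    (e : EuclideanSpace ℝ (Fin n)) (s : ℝ)
    {U V : Set (EuclideanSpace ℝ (Fin n))} (hU : MeasurableSet U) (hV : MeasurableSet V) :
    Measurable (KK G e s U V) := by
  have h := FF_meas hG hU hV
  have h1 : Measurable fun p : EuclideanSpace ℝ (Fin n) × EuclideanSpace ℝ (Fin n) =>
      sg e s p.1 := (sg_measurable e s).comp measurable_fst
  have h2 : Measurable fun p : EuclideanSpace ℝ (Fin n) × EuclideanSpace ℝ (Fin n) =>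
      sg e s p.2 := (sg_measurable e s).comp measurable_snd
  exact (h.add (h.comp (h1.prodMk h2))).add
    ((h.comp (measurable_fst.prodMk h2)).add (h.comp (h1.prodMk measurable_snd)))

lemma lintegral_KK {G : EuclideanSpace ℝ (Fin n) → ℝ≥0∞} (hG : Ker G)
    {e : EuclideanSpace ℝ (Fin n)} (he : ‖e‖ = 1) (s : ℝ)
    {U V : Set (EuclideanSpace ℝ (Fin n))} (hU : MeasurableSet U) (hV : MeasurableSet V) :
    ∫⁻ p, KK G e s U V p ∂((volume : Measure (EuclideanSpace ℝ (Fin n))).prod volume)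
      = 4 * RR G U V := by
  have h := FF_meas hG hU hV
  have m := sg_mp he s
  have mid := MeasurePreserving.id (volume : Measure (EuclideanSpace ℝ (Fin n)))
  have a1 := (m.prod m).lintegral_comp h
  have a2 := (mid.prod m).lintegral_comp h
  have a3 := (m.prod mid).lintegral_comp h
  simp only [Prod.map_def, id] at a1 a2 a3
  unfold KK
  have h1 : Measurable fun p : EuclideanSpace ℝ (Fin n) × EuclideanSpace ℝ (Fin n) =>
      sg e s p.1 := (sg_measurable e s).comp measurable_fst
  have h2 : Measurable fun p : EuclideanSpace ℝ (Fin n) × EuclideanSpace ℝ (Fin n) =>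
      sg e s p.2 := (sg_measurable e s).comp measurable_snd
  have q1 : Measurable fun p : EuclideanSpace ℝ (Fin n) × EuclideanSpace ℝ (Fin n) =>
      FF G U V p + FF G U V (sg e s p.1, sg e s p.2) := h.add (h.comp (h1.prodMk h2))
  have q2 : Measurable fun p : EuclideanSpace ℝ (Fin n) × EuclideanSpace ℝ (Fin n) =>
      FF G U V (p.1, sg e s p.2) := h.comp (measurable_fst.prodMk h2)
  rw [lintegral_add_left q1, lintegral_add_left h, lintegral_add_left q2, a1, a2, a3]
  unfold RR
  ring

lemma KK_sg1 {G : EuclideanSpace ℝ (Fin n) → ℝ≥0∞}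
    {e : EuclideanSpace ℝ (Fin n)} (he : ‖e‖ = 1) (s : ℝ)
    (U V : Set (EuclideanSpace ℝ (Fin n))) (x y) :
    KK G e s U V (sg e s x, y) = KK G e s U V (x, y) := by
  simp only [KK, sg_sg he]; ring

lemma KK_sg2 {G : EuclideanSpace ℝ (Fin n) → ℝ≥0∞}
    {e : EuclideanSpace ℝ (Fin n)} (he : ‖e‖ = 1) (s : ℝ)
    (U V : Set (EuclideanSpace ℝ (Fin n))) (x y) :
    KK G e s U V (x, sg e s y) = KK G e s U V (x, y) := by
  simp only [KK, sg_sg he]; ring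

lemma KK_eq {G : EuclideanSpace ℝ (Fin n) → ℝ≥0∞} (hG : Ker G)
    {e : EuclideanSpace ℝ (Fin n)} (he : ‖e‖ = 1) (s : ℝ)
    (U V : Set (EuclideanSpace ℝ (Fin n))) (x y) : KK G e s U V (x, y) =
    ((U ×ˢ V).indicator (fun _ => G (x - y)) (x, y) +
     (U ×ˢ V).indicator (fun _ => G (x - y)) (sg e s x, sg e s y)) +
    ((U ×ˢ V).indicator (fun _ => G (x - sg e s y)) (x, sg e s y) +
     (U ×ˢ V).indicator (fun _ => G (x - sg e s y)) (sg e s x, y)) := by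
  have h1 : G (sg e s x - sg e s y) = G (x - y) := hG.rad _ _ (norm_sg_sub_sg he s x y)
  have h2 : G (sg e s x - y) = G (x - sg e s y) := hG.rad _ _ (norm_sub_sg_comm he s x y)
  simp only [KK, FF, indicator, h1, h2]

lemma KK_le {G : EuclideanSpace ℝ (Fin n) → ℝ≥0∞} (hG : Ker G)
    {e : EuclideanSpace ℝ (Fin n)} (he : ‖e‖ = 1) (s : ℝ)
    (U V : Set (EuclideanSpace ℝ (Fin n))) (p) :
    KK G e s U V p ≤ KK G e s (Pol e s U) (Pol e s V) p := by
  have key : ∀ x y, inner ℝ x e ≤ s → inner ℝ y e ≤ s →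
      KK G e s U V (x, y) ≤ KK G e s (Pol e s U) (Pol e s V) (x, y) := by
    intro x y hx hy
    have hle : G (x - sg e s y) ≤ G (x - y) := by
      apply hG.anti
      have := norm_sq_sub_sg he s x y
      have h2 : 0 ≤ 4 * (s - inner ℝ x e) * (s - inner ℝ y e) :=
        mul_nonneg (by linarith) (by linarith)
      exact (sq_le_sq₀ (norm_nonneg _) (norm_nonneg _)).1 (by linarith)
    rw [KK_eq hG he, KK_eq hG he]
    have h1 := mem_Pol_of_le (U := U) hx
    have h2 := sg_mem_Pol_of_le he (U := U) hx
    have h3 := mem_Pol_of_le (U := V) hy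
    have h4 := sg_mem_Pol_of_le he (U := V) hy
    simp only [indicator, mem_prod]
    by_cases a : x ∈ U <;> by_cases b : sg e s x ∈ U <;> by_cases c : y ∈ V <;>
      by_cases d : sg e s y ∈ V <;> simp [a, b, c, d, h1, h2, h3, h4, hle, add_comm]
  have sub : ∀ x, ∃ x', inner ℝ x' e ≤ s ∧ (x = x' ∨ x = sg e s x') := by
    intro x
    rcases le_total (inner ℝ x e) s with h | h
    · exact ⟨x, h, Or.inl rfl⟩
    · exact ⟨sg e s x, (sg_plus he x).2 h, Or.inr (sg_sg he s x).symm⟩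
  obtain ⟨x, y⟩ := p
  obtain ⟨x', hx', hx⟩ := sub x
  obtain ⟨y', hy', hy⟩ := sub y
  have := key x' y' hx' hy'
  rcases hx with rfl | rfl <;> rcases hy with rfl | rfl <;>
    simpa only [KK_sg1 he, KK_sg2 he] using this

lemma RR_Pol {G : EuclideanSpace ℝ (Fin n) → ℝ≥0∞} (hG : Ker G)
    {e : EuclideanSpace ℝ (Fin n)} (he : ‖e‖ = 1) (s : ℝ)
    {U V : Set (EuclideanSpace ℝ (Fin n))} (hU : MeasurableSet U) (hV : MeasurableSet V) :
    RR G U V ≤ RR G (Pol e s U) (Pol e s V) := by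
  have h : ∫⁻ p, KK G e s U V p ∂((volume : Measure (EuclideanSpace ℝ (Fin n))).prod volume)
    ≤ _ := lintegral_mono (KK_le hG he s U V)
  rw [lintegral_KK hG he s hU hV,
    lintegral_KK hG he s (Pol_meas e s hU) (Pol_meas e s hV)] at h
  exact (ENNReal.mul_le_mul_iff_right (by simp) (by simp)).1 h

lemma AA_neg {e : EuclideanSpace ℝ (Fin n)} (he : ‖e‖ = 1) (s : ℝ)
    (V : Set (EuclideanSpace ℝ (Fin n))) :
    sg e s ⁻¹' (AA (-e) (-s) V) = {y | inner ℝ y e ≤ s ∧ y ∉ V ∧ sg e s y ∈ V} := by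
  ext y
  simp only [AA, mem_preimage, mem_ofPred_eq, sg_neg, sg_sg he, inner_neg_right, inner_sg he,
    neg_le_neg_iff]
  constructor
  · rintro ⟨a, b, c⟩; exact ⟨by linarith, c, a⟩
  · rintro ⟨a, b, c⟩; exact ⟨c, by linarith, b⟩

lemma RR_Pol_eq {G : EuclideanSpace ℝ (Fin n) → ℝ≥0∞} (hG : Ker G)
    {e : EuclideanSpace ℝ (Fin n)} (he : ‖e‖ = 1) (s : ℝ)
    {U V : Set (EuclideanSpace ℝ (Fin n))} (hU : MeasurableSet U) (hV : MeasurableSet V)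
    (hfin : RR G U V ≠ ⊤) (heq : RR G (Pol e s U) (Pol e s V) ≤ RR G U V) :
    volume (AA e s U) = 0 ∨ volume (AA (-e) (-s) V) = 0 := by
  have h1 := lintegral_KK hG he s hU hV
  have h2 := lintegral_KK hG he s (Pol_meas e s hU) (Pol_meas e s hV)
  have hae := ae_eq_of_ae_le_of_lintegral_le (ae_of_all _ (KK_le hG he s U V))
    (by rw [h1]; exact ENNReal.mul_ne_top (by simp) hfin)
    (KK_meas hG e s (Pol_meas e s hU) (Pol_meas e s hV)).aemeasurable
    (by rw [h1, h2]; gcongr)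
  set D := sg e s ⁻¹' (AA (-e) (-s) V) with hD
  have hDm : volume D = volume (AA (-e) (-s) V) :=
    (sg_mp he s).measure_preimage (AA_meas _ _ hV).nullMeasurableSet
  rw [← hDm, ← mul_eq_zero, ← Measure.prod_prod]
  refine measure_mono_null ?_ hae
  rintro ⟨x, y⟩ ⟨hx, hy⟩
  rw [hD, AA_neg he] at hy
  obtain ⟨a, hx1, b⟩ := hx
  obtain ⟨hy1, c, d⟩ := hy
  simp only at a b c d hx1 hy1
  have h1 := mem_Pol_of_le (U := U) hx1
  have h2 := sg_mem_Pol_of_le he (U := U) hx1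
  have h3 := mem_Pol_of_le (U := V) hy1
  have h4 := sg_mem_Pol_of_le he (U := V) hy1
  have hx2 : inner ℝ x e < s := by
    refine lt_of_le_of_ne hx1 fun h => ?_
    rw [sg_fix h] at b; exact b a
  have hy2 : inner ℝ y e < s := by
    refine lt_of_le_of_ne hy1 fun h => ?_
    rw [sg_fix h] at d; exact c d
  have hlt : G (x - sg e s y) < G (x - y) := by
    apply hG.str
    have := norm_sq_sub_sg he s x y
    have h2 : 0 < 4 * (s - inner ℝ x e) * (s - inner ℝ y e) :=
      mul_pos (by linarith) (by linarith)
    exact (sq_lt_sq₀ (norm_nonneg _) (norm_nonneg _)).1 (by linarith)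
  simp only [mem_compl_iff, mem_ofPred_eq]
  intro h
  rw [KK_eq hG he, KK_eq hG he] at h
  simp [indicator, a, b, c, d, h1, h2, h3, h4] at h
  exact hlt.ne h

lemma RR_symm {G : EuclideanSpace ℝ (Fin n) → ℝ≥0∞} (hG : Ker G)
    {U V : Set (EuclideanSpace ℝ (Fin n))} (hU : MeasurableSet U) (hV : MeasurableSet V) :
    RR G U V = RR G V U := by
  have := (Measure.measurePreserving_swap (μ := (volume : Measure (EuclideanSpace ℝ (Fin n))))
    (ν := (volume : Measure (EuclideanSpace ℝ (Fin n))))).lintegral_comp (FF_meas hG hV hU)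
  rw [RR, RR, ← this]
  refine lintegral_congr fun p => ?_
  have h : G (p.1 - p.2) = G (p.2 - p.1) := hG.rad _ _ (norm_sub_rev _ _)
  by_cases a : p.1 ∈ U <;> by_cases b : p.2 ∈ V <;> simp [FF, indicator, a, b, h]

lemma RR_mono {G : EuclideanSpace ℝ (Fin n) → ℝ≥0∞} {U V U' V' : Set (EuclideanSpace ℝ (Fin n))}
    (h1 : U ⊆ U') (h2 : V ⊆ V') : RR G U V ≤ RR G U' V' :=
  lintegral_mono (indicator_le_indicator_of_subset (prod_mono h1 h2) (fun _ => zero_le))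

lemma RR_congr {G : EuclideanSpace ℝ (Fin n) → ℝ≥0∞} {U V U' V' : Set (EuclideanSpace ℝ (Fin n))}
    (h1 : U =ᵐ[volume] U') (h2 : V =ᵐ[volume] V') : RR G U V = RR G U' V' := by
  refine lintegral_congr_ae ?_
  have a1 := (Measure.quasiMeasurePreserving_fst
    (μ := (volume : Measure (EuclideanSpace ℝ (Fin n))))
    (ν := (volume : Measure (EuclideanSpace ℝ (Fin n))))).ae h1
  have a2 := (Measure.quasiMeasurePreserving_snd
    (μ := (volume : Measure (EuclideanSpace ℝ (Fin n))))
    (ν := (volume : Measure (EuclideanSpace ℝ (Fin n))))).ae h2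
  filter_upwards [a1, a2] with p h h'
  have h : (p.1 ∈ U) = (p.1 ∈ U') := h
  have h' : (p.2 ∈ V) = (p.2 ∈ V') := h'
  by_cases a : p.1 ∈ U' <;> by_cases b : p.2 ∈ V' <;> simp [FF, indicator, a, b, h, h']

lemma RR_le {G : EuclideanSpace ℝ (Fin n) → ℝ≥0∞} (hG : Ker G)
    {U V : Set (EuclideanSpace ℝ (Fin n))} (hU : MeasurableSet U) (hV : MeasurableSet V) :
    RR G U V ≤ volume U * ∫⁻ x, G x := by
  rw [RR, lintegral_prod _ (FF_meas hG hU hV).aemeasurable]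
  calc _ ≤ ∫⁻ x, U.indicator (fun _ => ∫⁻ z, G z) x := by
        refine lintegral_mono fun x => ?_
        by_cases hx : x ∈ U
        · rw [indicator_of_mem hx, ← lintegral_sub_left_eq_self G x]
          refine lintegral_mono fun y => ?_
          exact indicator_le_self _ (fun p => G (p.1 - p.2)) (x, y)
        · simp [FF, hx]
    _ = _ := by rw [lintegral_indicator hU, lintegral_const, mul_comm]; simp

lemma RR_ne_top {G : EuclideanSpace ℝ (Fin n) → ℝ≥0∞} (hG : Ker G)
    {U V : Set (EuclideanSpace ℝ (Fin n))} (hU : MeasurableSet U) (hV : MeasurableSet V)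
    (h : volume U ≠ ⊤) : RR G U V ≠ ⊤ :=
  ne_top_of_le_ne_top (ENNReal.mul_ne_top h hG.fin) (RR_le hG hU hV)

lemma RR_union_left {G : EuclideanSpace ℝ (Fin n) → ℝ≥0∞} (hG : Ker G)
    {U U' V : Set (EuclideanSpace ℝ (Fin n))} (hU : MeasurableSet U) 
    (hV : MeasurableSet V) : RR G (U ∪ U') V ≤ RR G U V + RR G U' V := by
  rw [RR, RR, RR, ← lintegral_add_left (FF_meas hG hU hV)]
  refine lintegral_mono fun p => ?_
  by_cases a : p.1 ∈ U <;> by_cases b : p.1 ∈ U' <;> by_cases c : p.2 ∈ V <;>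
    simp [FF, indicator, a, b, c]

/-- perturbation bound -/
lemma RR_pert {G : EuclideanSpace ℝ (Fin n) → ℝ≥0∞} (hG : Ker G)
    {U V B C : Set (EuclideanSpace ℝ (Fin n))} (hU : MeasurableSet U) (hV : MeasurableSet V)
    (hB : MeasurableSet B) (hC : MeasurableSet C) :
    RR G U V ≤ RR G B C + (volume (U \ B) + volume (V \ C)) * ∫⁻ x, G x := by
  calc RR G U V ≤ RR G (B ∪ U \ B) V := RR_mono (by simp) le_rfl
    _ ≤ RR G B V + RR G (U \ B) V := RR_union_left hG hB hV
    _ = RR G V B + RR G (U \ B) V := by rw [RR_symm hG hB hV]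
    _ ≤ RR G (C ∪ V \ C) B + RR G (U \ B) V := by gcongr; exact RR_mono (by simp) le_rfl
    _ ≤ (RR G C B + RR G (V \ C) B) + RR G (U \ B) V := by
        gcongr; exact RR_union_left hG hC hB
    _ ≤ (RR G C B + volume (V \ C) * ∫⁻ x, G x) + volume (U \ B) * ∫⁻ x, G x := by
        gcongr
        · exact RR_le hG (hV.diff hC) hB
        · exact RR_le hG (hU.diff hB) hV
    _ = _ := by rw [RR_symm hG hC hB]; ring

lemma RR_iUnion {G : EuclideanSpace ℝ (Fin n) → ℝ≥0∞} (hG : Ker G)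
    {U V : ℕ → Set (EuclideanSpace ℝ (Fin n))} (hU : ∀ k, MeasurableSet (U k))
    (hV : ∀ k, MeasurableSet (V k)) (mU : Monotone U) (mV : Monotone V) :
    RR G (⋃ k, U k) (⋃ k, V k) = ⨆ k, RR G (U k) (V k) := by
  unfold RR
  rw [← lintegral_iSup (fun k => FF_meas hG (hU k) (hV k))]
  · refine lintegral_congr fun p => ?_
    apply le_antisymm
    · by_cases h : p ∈ (⋃ k, U k) ×ˢ (⋃ k, V k)
      · obtain ⟨h1, h2⟩ := h
        obtain ⟨i, hi⟩ := mem_iUnion.1 h1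
        obtain ⟨j, hj⟩ := mem_iUnion.1 h2
        refine le_trans ?_ (le_iSup _ (max i j))
        have : p ∈ U (max i j) ×ˢ V (max i j) :=
          ⟨mU (le_max_left _ _) hi, mV (le_max_right _ _) hj⟩
        rw [FF, FF, indicator_of_mem this, indicator_of_mem (mem_prod.2 ⟨h1, h2⟩)]
      · rw [FF, indicator_of_notMem h]; exact zero_le
    · refine iSup_le fun k => ?_
      exact indicator_le_indicator_of_subset (prod_mono (subset_iUnion _ k) (subset_iUnion _ k))
        (fun _ => zero_le) p
  · intro i j hij p
    exact indicator_le_indicator_of_subset (prod_mono (mU hij) (mV hij)) (fun _ => zero_le) p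

lemma RR_trans {G : EuclideanSpace ℝ (Fin n) → ℝ≥0∞} (hG : Ker G)
    {U V : Set (EuclideanSpace ℝ (Fin n))} (hU : MeasurableSet U) (hV : MeasurableSet V)
    (z : EuclideanSpace ℝ (Fin n)) :
    RR G ((fun x => x + z) ⁻¹' U) ((fun x => x + z) ⁻¹' V) = RR G U V := by
  have m := measurePreserving_add_right (volume : Measure (EuclideanSpace ℝ (Fin n))) z
  rw [RR, RR, ← (m.prod m).lintegral_comp (FF_meas hG hU hV)]
  refine lintegral_congr fun p => ?_
  by_cases a : p.1 + z ∈ U <;> by_cases b : p.2 + z ∈ V <;> simp [FF, indicator, a, b]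

end Riesz


namespace Riesz
open Set Filter Topology ENNReal

variable {n : ℕ}

lemma vol_image_le {L : NNReal} {f : EuclideanSpace ℝ (Fin n) → EuclideanSpace ℝ (Fin n)}
    {t : Set (EuclideanSpace ℝ (Fin n))} (h : LipschitzOnWith L f t) :
    volume (f '' t) ≤ (L : ℝ≥0∞) ^ (n : ℝ) * volume t := by
  have hH : (Measure.hausdorffMeasure (n : ℝ) : Measure (EuclideanSpace ℝ (Fin n))).IsAddHaarMeasure := by
    simpa using MeasureTheory.isAddHaarMeasure_hausdorffMeasure (E := EuclideanSpace ℝ (Fin n))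
  have h1 := Measure.isAddLeftInvariant_eq_smul
    (volume : Measure (EuclideanSpace ℝ (Fin n))) (Measure.hausdorffMeasure (n : ℝ))
  have h2 := h.hausdorffMeasure_image_le (d := (n : ℝ)) (by positivity)
  rw [h1]
  simp only [Measure.smul_apply, ENNReal.smul_def, smul_eq_mul]
  calc _ ≤ _ := mul_le_mul_right h2 _
    _ = _ := by ring

/-- reflection exchanging `0` and `w` -/
noncomputable def ph (w x : EuclideanSpace ℝ (Fin n)) : EuclideanSpace ℝ (Fin n) :=
  sg (‖w‖⁻¹ • w) (‖w‖ / 2) x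

lemma ph_eq {w : EuclideanSpace ℝ (Fin n)} (hw : w ≠ 0) (x : EuclideanSpace ℝ (Fin n)) :
    ph w x = x + w - (2 * inner ℝ x (‖w‖⁻¹ • w)) • (‖w‖⁻¹ • w) := by
  have : w = ‖w‖ • (‖w‖⁻¹ • w) := by
    rw [smul_smul, mul_inv_cancel₀ (norm_ne_zero_iff.2 hw), one_smul]
  unfold ph sg
  conv_rhs => rw [add_sub_assoc]; arg 2; arg 1; rw [this]
  rw [← sub_smul]
  congr 2; ring

lemma unit_lip {δ : ℝ} (hδ : 0 < δ) {w w' : EuclideanSpace ℝ (Fin n)} (hw : δ ≤ ‖w‖)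
    (hw' : δ ≤ ‖w'‖) : ‖‖w‖⁻¹ • w - ‖w'‖⁻¹ • w'‖ ≤ 2 / δ * ‖w - w'‖ := by
  have p : 0 < ‖w‖ := hδ.trans_le hw
  have p' : 0 < ‖w'‖ := hδ.trans_le hw'
  have : ‖w‖⁻¹ • w - ‖w'‖⁻¹ • w' = ‖w‖⁻¹ • (w - w') + (‖w‖⁻¹ - ‖w'‖⁻¹) • w' := by module
  rw [this]
  calc _ ≤ ‖‖w‖⁻¹ • (w - w')‖ + ‖(‖w‖⁻¹ - ‖w'‖⁻¹) • w'‖ := norm_add_le _ _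
    _ = ‖w‖⁻¹ * ‖w - w'‖ + |‖w‖⁻¹ - ‖w'‖⁻¹| * ‖w'‖ := by
        rw [norm_smul, norm_smul, Real.norm_eq_abs, Real.norm_eq_abs, abs_of_pos (inv_pos.2 p)]
    _ = ‖w‖⁻¹ * ‖w - w'‖ + ‖w‖⁻¹ * |‖w'‖ - ‖w‖| := by
        have : ‖w‖⁻¹ - ‖w'‖⁻¹ = ‖w‖⁻¹ * (‖w'‖ - ‖w‖) * ‖w'‖⁻¹ := by field_simp
        rw [this, abs_mul, abs_mul, abs_of_pos (inv_pos.2 p), abs_of_pos (inv_pos.2 p')]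
        field_simp
    _ ≤ ‖w‖⁻¹ * ‖w - w'‖ + ‖w‖⁻¹ * ‖w - w'‖ := by
        gcongr
        rw [norm_sub_rev]; exact abs_norm_sub_norm_le _ _
    _ = 2 * ‖w‖⁻¹ * ‖w - w'‖ := by ring
    _ ≤ 2 / δ * ‖w - w'‖ := by
        rw [div_eq_mul_inv]; gcongr

lemma ph_lip {δ ρ : ℝ} (hδ : 0 < δ) (hρ : 0 ≤ ρ) {x : EuclideanSpace ℝ (Fin n)} (hx : ‖x‖ ≤ ρ) :
    LipschitzOnWith (Real.toNNReal (1 + 8 * ρ / δ)) (fun w => ph w x) {w | δ ≤ ‖w‖} := by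
  refine LipschitzOnWith.of_dist_le_mul fun w hw w' hw' => ?_
  have hw : δ ≤ ‖w‖ := hw
  have hw' : δ ≤ ‖w'‖ := hw'
  have p : 0 < ‖w‖ := hδ.trans_le hw
  have p' : 0 < ‖w'‖ := hδ.trans_le hw'
  rw [Real.coe_toNNReal _ (by positivity), dist_eq_norm, dist_eq_norm,
    ph_eq (norm_pos_iff.1 p), ph_eq (norm_pos_iff.1 p')]
  have hl := unit_lip hδ hw hw'
  have n1 : ‖‖w‖⁻¹ • w‖ = 1 := norm_smul_inv_norm (𝕜 := ℝ) (norm_pos_iff.1 p)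
  have n2 : ‖‖w'‖⁻¹ • w'‖ = 1 := norm_smul_inv_norm (𝕜 := ℝ) (norm_pos_iff.1 p')
  set a := ‖w‖⁻¹ • w
  set b := ‖w'‖⁻¹ • w'
  have e1 : x + w - (2 * inner ℝ x a) • a - (x + w' - (2 * inner ℝ x b) • b) =
      (w - w') - (2 : ℝ) • ((inner ℝ x (a - b)) • a + (inner ℝ x b) • (a - b)) := by
    rw [inner_sub_right]; module
  rw [e1]
  have b1 : ‖inner ℝ x (a - b)‖ ≤ ρ * ‖a - b‖ :=
    (norm_inner_le_norm _ _).trans (by gcongr)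
  have b2 : ‖inner ℝ x b‖ ≤ ρ := by
    have := norm_inner_le_norm (𝕜 := ℝ) x b
    rw [n2, mul_one] at this; exact this.trans hx
  calc _ ≤ ‖w - w'‖ + 2 * (‖inner ℝ x (a - b)‖ * ‖a‖ + ‖inner ℝ x b‖ * ‖a - b‖) := by
        refine (norm_sub_le _ _).trans ?_
        gcongr
        rw [norm_smul, Real.norm_two]
        gcongr
        exact (norm_add_le _ _).trans (add_le_add (norm_smul_le _ _) (norm_smul_le _ _))
    _ ≤ ‖w - w'‖ + 2 * (ρ * ‖a - b‖ * 1 + ρ * ‖a - b‖) := by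
        rw [n1]; gcongr
    _ = ‖w - w'‖ + 4 * ρ * ‖a - b‖ := by ring
    _ ≤ ‖w - w'‖ + 4 * ρ * (2 / δ * ‖w - w'‖) := by gcongr
    _ = _ := by ring

lemma ph_surj {x y : EuclideanSpace ℝ (Fin n)} (h : ‖x‖ < ‖y‖) :
    ∃ w, ‖y‖ - ‖x‖ ≤ ‖w‖ ∧ ‖w‖ ≤ ‖y‖ + ‖x‖ ∧ ph w x = y := by
  have hd : 0 < ‖y - x‖ := by
    rw [norm_pos_iff, sub_ne_zero]; rintro rfl; exact lt_irrefl _ h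
  have h1 : ‖y - x‖ ≤ ‖y‖ + ‖x‖ := norm_sub_le _ _
  have h2 : ‖y‖ - ‖x‖ ≤ ‖y - x‖ := norm_sub_norm_le _ _
  have hx0 := norm_nonneg x
  set t : ℝ := (‖y‖ ^ 2 - ‖x‖ ^ 2) / ‖y - x‖ ^ 2 with ht
  have htp : 0 < t := div_pos (by nlinarith) (by positivity)
  have hn : ‖t • (y - x)‖ = (‖y‖ ^ 2 - ‖x‖ ^ 2) / ‖y - x‖ := by
    rw [norm_smul, Real.norm_eq_abs, abs_of_pos htp, ht]; field_simp
  refine ⟨t • (y - x), ?_, ?_, ?_⟩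
  · rw [hn, le_div_iff₀ hd]; nlinarith
  · rw [hn, div_le_iff₀ hd]; nlinarith
  · have hun : ‖t • (y - x)‖⁻¹ • (t • (y - x)) = ‖y - x‖⁻¹ • (y - x) := by
      rw [norm_smul, Real.norm_eq_abs, abs_of_pos htp, smul_smul]
      congr 1; field_simp
    rw [ph, sg, hun, hn, inner_smul_right, smul_smul]
    have : (2 * ((‖y‖ ^ 2 - ‖x‖ ^ 2) / ‖y - x‖ / 2 - ‖y - x‖⁻¹ * inner ℝ x (y - x))) * ‖y - x‖⁻¹
        = 1 := by
      have h3 : ‖y - x‖ ^ 2 = ‖y‖ ^ 2 - 2 * inner ℝ x y + ‖x‖ ^ 2 := by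
        rw [norm_sub_sq_real, real_inner_comm]
      rw [inner_sub_right, real_inner_self_eq_norm_sq]
      field_simp
      rw [h3]; ring
    rw [this]; simp

lemma ph_meas : Measurable fun p : EuclideanSpace ℝ (Fin n) × EuclideanSpace ℝ (Fin n) =>
    ph p.1 p.2 := by
  unfold ph sg; fun_prop

lemma avg (n : ℕ) {δ ρ : ℝ} (hδ : 0 < δ) (hρ : 0 ≤ ρ) : ∃ c : ℝ≥0∞, c ≠ 0 ∧
    ∀ P Q : Set (EuclideanSpace ℝ (Fin n)), MeasurableSet P → MeasurableSet Q →
      P ⊆ Metric.closedBall 0 ρ → Q ⊆ Metric.closedBall 0 ρ →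
      (∀ x ∈ P, ∀ y ∈ Q, ‖x‖ + δ ≤ ‖y‖) → volume P * volume Q ≠ 0 →
      ∃ (e : EuclideanSpace ℝ (Fin n)) (s : ℝ), ‖e‖ = 1 ∧ 0 < s ∧
        c * (volume P * volume Q) ≤ volume (P ∩ sg e s ⁻¹' Q) := by
  set K : ℝ≥0∞ := ((Real.toNNReal (1 + 8 * ρ / δ) : NNReal) : ℝ≥0∞) ^ (n : ℝ) with hK
  have hKt : K ≠ ⊤ := ENNReal.rpow_ne_top_of_nonneg (by positivity) (by simp)
  set W : Set (EuclideanSpace ℝ (Fin n)) := {w | δ ≤ ‖w‖ ∧ ‖w‖ ≤ 2 * ρ} with hW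
  have hWm : MeasurableSet W :=
    (measurableSet_le measurable_const measurable_norm).inter
      (measurableSet_le measurable_norm measurable_const)
  have hWt : volume W ≠ ⊤ := by
    refine ne_top_of_le_ne_top (measure_closedBall_lt_top (x := 0) (r := 2 * ρ)).ne
      (measure_mono fun w hw => ?_)
    simpa using hw.2
  have hKW : K * volume W ≠ ⊤ := ENNReal.mul_ne_top hKt hWt
  refine ⟨(K * volume W + 1)⁻¹, by simp [hKW], fun P Q hP hQ hPρ hQρ hPQ h0 => ?_⟩
  by_contra! hcon
  set c := (K * volume W + 1)⁻¹ with hc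
  have hPt : volume P ≠ ⊤ := ne_top_of_le_ne_top (measure_closedBall_lt_top).ne (measure_mono hPρ)
  have hQt : volume Q ≠ ⊤ := ne_top_of_le_ne_top (measure_closedBall_lt_top).ne (measure_mono hQρ)
  have up : ∫⁻ w in W, ∫⁻ x in P, Q.indicator 1 (ph w x) ≤
      c * (volume P * volume Q) * volume W := by
    calc _ ≤ ∫⁻ w in W, c * (volume P * volume Q) := by
          refine setLIntegral_mono measurable_const fun w hw => ?_
          have hw0 : 0 < ‖w‖ := hδ.trans_le hw.1
          have h1 := hcon (‖w‖⁻¹ • w) (‖w‖ / 2)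
            (norm_smul_inv_norm (𝕜 := ℝ) (norm_pos_iff.1 hw0)) (by positivity)
          refine le_trans (le_of_eq ?_) h1.le
          have hm : MeasurableSet (sg (‖w‖⁻¹ • w) (‖w‖ / 2) ⁻¹' Q) := sg_measurable _ _ hQ
          rw [inter_comm, ← Measure.restrict_apply hm, ← lintegral_indicator_one hm]
          rfl
      _ = _ := by rw [setLIntegral_const]
  have hm2 : Measurable fun p : EuclideanSpace ℝ (Fin n) × EuclideanSpace ℝ (Fin n) =>
      Q.indicator (1 : EuclideanSpace ℝ (Fin n) → ℝ≥0∞) (ph p.1 p.2) :=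
    (measurable_one.indicator hQ).comp ph_meas
  rw [lintegral_lintegral_swap hm2.aemeasurable] at up
  have lo : volume P * volume Q ≤ K * ∫⁻ x in P, ∫⁻ w in W, Q.indicator 1 (ph w x) := by
    rw [← lintegral_const_mul' _ _ hKt, mul_comm, ← setLIntegral_const]
    refine setLIntegral_mono' hP fun x hx => ?_
    have hm : MeasurableSet {w | ph w x ∈ Q} :=
      (ph_meas.comp (measurable_id.prodMk measurable_const)) hQ
    have e1 : ∫⁻ w in W, Q.indicator (1 : EuclideanSpace ℝ (Fin n) → ℝ≥0∞) (ph w x)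
        = volume ({w | ph w x ∈ Q} ∩ W) := by
      rw [← Measure.restrict_apply hm, ← lintegral_indicator_one hm]
      rfl
    rw [e1]
    have hxρ : ‖x‖ ≤ ρ := by simpa using hPρ hx
    have hl : LipschitzOnWith (Real.toNNReal (1 + 8 * ρ / δ)) (fun w => ph w x)
        ({w | ph w x ∈ Q} ∩ W) := (ph_lip hδ hρ hxρ).mono fun w hw => hw.2.1
    refine le_trans (measure_mono fun y hy => ?_) (vol_image_le hl)
    have h1 := hPQ x hx y hy
    obtain ⟨w, w1, w2, w3⟩ := ph_surj (show ‖x‖ < ‖y‖ by linarith)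
    have hyρ : ‖y‖ ≤ ρ := by simpa using hQρ hy
    refine ⟨w, ⟨?_, by linarith, by linarith⟩, w3⟩
    show ph w x ∈ Q
    rw [w3]; exact hy
  have hpos : volume P * volume Q ≠ ⊤ := ENNReal.mul_ne_top hPt hQt
  have h3 : volume P * volume Q * 1 ≤ volume P * volume Q * (K * volume W * c) := by
    calc _ ≤ K * (c * (volume P * volume Q) * volume W) := by
          rw [mul_one]; exact lo.trans (mul_le_mul_right up K)
      _ = _ := by ring
  have h4 := (ENNReal.mul_le_mul_iff_right h0 hpos).1 h3
  rw [hc, ← div_eq_mul_inv, ENNReal.le_div_iff_mul_le (by simp) (by simp [hKW]), one_mul] at h4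
  exact absurd h4 (not_le.2 (ENNReal.lt_add_right hKW one_ne_zero))

end Riesz


namespace Riesz
open Set Filter Topology ENNReal

variable {n : ℕ}

lemma thin_shell (r : ℝ) {η : ℝ≥0∞} (hη : η ≠ 0) : ∃ ε : ℝ, 0 < ε ∧
    volume (Metric.ball (0 : EuclideanSpace ℝ (Fin n)) r \ Metric.ball 0 (r - ε)) ≤ η := by
  have h := tendsto_measure_iInter_atTop (μ := (volume : Measure (EuclideanSpace ℝ (Fin n))))
    (s := fun k : ℕ => Metric.ball (0 : EuclideanSpace ℝ (Fin n)) r \ Metric.ball 0 (r - 1 / ((k : ℝ) + 1)))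
    (fun k => (measurableSet_ball.diff measurableSet_ball).nullMeasurableSet)
    (by
      intro a b hab
      refine sdiff_subset_sdiff_right (Metric.ball_subset_ball ?_)
      have := Nat.one_div_le_one_div (α := ℝ) hab
      linarith)
    ⟨0, ne_top_of_le_ne_top measure_ball_lt_top.ne (measure_mono sdiff_subset)⟩
  have h0 : (⋂ k : ℕ, Metric.ball (0 : EuclideanSpace ℝ (Fin n)) r \ Metric.ball 0 (r - 1 / ((k : ℝ) + 1))) = ∅ := by
    ext x
    simp only [mem_iInter, mem_empty_iff_false, iff_false, not_forall]
    by_cases hx : ‖x‖ < r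
    · obtain ⟨k, hk⟩ := exists_nat_one_div_lt (sub_pos.2 hx)
      refine ⟨k, fun hh => hh.2 ?_⟩
      rw [mem_ball_zero_iff]; linarith
    · exact ⟨0, fun hh => hx (mem_ball_zero_iff.1 hh.1)⟩
  rw [h0, measure_empty] at h
  obtain ⟨k, hk⟩ := (h.eventually (gt_mem_nhds (pos_iff_ne_zero.2 hη))).exists
  exact ⟨1 / ((k : ℝ) + 1), by positivity, hk.le⟩

lemma diff_comm_vol {U B : Set (EuclideanSpace ℝ (Fin n))} (hU : MeasurableSet U)
    (hB : MeasurableSet B) (h : volume U = volume B) (hf : volume U ≠ ⊤) :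
    volume (B \ U) = volume (U \ B) := by
  have h1 := measure_inter_add_sdiff (μ := volume) U hB
  have h2 := measure_inter_add_sdiff (μ := volume) B hU
  rw [inter_comm, ← h, ← h1] at h2
  exact (ENNReal.add_right_inj (ne_top_of_le_ne_top hf (measure_mono inter_subset_left))).1 h2

lemma drop (ρ r : ℝ) (hρ : 0 ≤ ρ) {η : ℝ≥0∞} (hη : η ≠ 0) : ∃ c : ℝ≥0∞, c ≠ 0 ∧
    ∀ U : Set (EuclideanSpace ℝ (Fin n)), MeasurableSet U → U ⊆ Metric.closedBall 0 ρ →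
      volume U = volume (Metric.ball (0 : EuclideanSpace ℝ (Fin n)) r) →
      η ≤ volume (U \ Metric.ball 0 r) → ∃ (e : EuclideanSpace ℝ (Fin n)) (s : ℝ), ‖e‖ = 1 ∧ 0 < s ∧
        c ≤ volume ((Metric.ball 0 r \ U) ∩ sg e s ⁻¹' (U \ Metric.ball 0 r)) := by
  have hη2 : η / 2 ≠ 0 := by simp [hη]
  obtain ⟨ε, hε, hsh⟩ := thin_shell (n := n) r hη2
  obtain ⟨c, hc, H⟩ := avg n hε (hρ.trans (le_max_left ρ r))
  refine ⟨c * (η / 2 * η), by simp [hc, hη], fun U hU hUρ hvol hUη => ?_⟩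
  have hUt : volume U ≠ ⊤ := by rw [hvol]; exact measure_ball_lt_top.ne
  have hηt : η ≠ ⊤ := ne_top_of_le_ne_top hUt (hUη.trans (measure_mono sdiff_subset))
  have e1 := diff_comm_vol hU measurableSet_ball hvol hUt
  have e2 : η / 2 ≤ volume (Metric.ball 0 (r - ε) \ U) := by
    have : η ≤ volume (Metric.ball 0 (r - ε) \ U) + η / 2 := by
      calc η ≤ volume (Metric.ball 0 r \ U) := by rw [e1]; exact hUη
        _ ≤ volume ((Metric.ball 0 (r - ε) \ U) ∪ (Metric.ball 0 r \ Metric.ball 0 (r - ε))) := by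
          refine measure_mono fun x hx => ?_
          by_cases h : x ∈ Metric.ball 0 (r - ε)
          · exact Or.inl ⟨h, hx.2⟩
          · exact Or.inr ⟨hx.1, h⟩
        _ ≤ _ := (measure_union_le _ _).trans (by gcongr)
    nth_rewrite 1 [← ENNReal.add_halves η] at this
    exact (ENNReal.add_le_add_iff_right (ENNReal.div_ne_top hηt (by simp))).1 this
  obtain ⟨e, s, he, hs, h⟩ := H (Metric.ball 0 (r - ε) \ U) (U \ Metric.ball 0 r)
    (measurableSet_ball.diff hU) (hU.diff measurableSet_ball)
    (fun x hx => by
      have := mem_ball_zero_iff.1 hx.1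
      rw [mem_closedBall_zero_iff]
      have := le_max_right ρ r
      linarith)
    (fun x hx => Metric.closedBall_subset_closedBall (le_max_left ρ r) (hUρ hx.1))
    (fun x hx y hy => by
      have h1 := mem_ball_zero_iff.1 hx.1
      have h2 : ¬ ‖y‖ < r := fun h => hy.2 (mem_ball_zero_iff.2 h)
      linarith)
    (mul_ne_zero (ne_bot_of_le_ne_bot hη2 e2) (ne_bot_of_le_ne_bot hη hUη))
  refine ⟨e, s, he, hs, ?_⟩
  calc c * (η / 2 * η) ≤ c * (volume (Metric.ball 0 (r - ε) \ U) * volume (U \ Metric.ball 0 r)) := by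
        gcongr
    _ ≤ _ := h
    _ ≤ _ := measure_mono (inter_subset_inter_left _ (sdiff_subset_sdiff_left
        (Metric.ball_subset_ball (by linarith))))

lemma riesz_bdd {G : EuclideanSpace ℝ (Fin n) → ℝ≥0∞} (hG : Ker G)
    {U V : Set (EuclideanSpace ℝ (Fin n))} (hU : MeasurableSet U) (hV : MeasurableSet V)
    {ρ : ℝ} (hρ : 0 ≤ ρ) (hUρ : U ⊆ Metric.closedBall 0 ρ) (hVρ : V ⊆ Metric.closedBall 0 ρ)
    {r r' : ℝ} (hr : volume U = volume (Metric.ball (0 : EuclideanSpace ℝ (Fin n)) r))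
    (hr' : volume V = volume (Metric.ball (0 : EuclideanSpace ℝ (Fin n)) r')) :
    RR G U V ≤ RR G (Metric.ball 0 r) (Metric.ball 0 r') := by
  set B : Set (EuclideanSpace ℝ (Fin n)) := Metric.ball 0 r with hB
  set C : Set (EuclideanSpace ℝ (Fin n)) := Metric.ball 0 r' with hC
  let S : Set (EuclideanSpace ℝ (Fin n)) → Set (EuclideanSpace ℝ (Fin n)) → Prop := fun U' V' =>
    MeasurableSet U' ∧ MeasurableSet V' ∧ U' ⊆ Metric.closedBall 0 ρ ∧ V' ⊆ Metric.closedBall 0 ρ ∧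
    volume U' = volume B ∧ volume V' = volume C ∧ RR G U V ≤ RR G U' V'
  have hS0 : S U V := ⟨hU, hV, hUρ, hVρ, hr, hr', le_rfl⟩
  have hBt : volume B ≠ ⊤ := measure_ball_lt_top.ne
  have hCt : volume C ≠ ⊤ := measure_ball_lt_top.ne
  have hSd : ∀ U' V', S U' V' → volume (U' \ B) + volume (V' \ C) ≠ ⊤ := by
    rintro U' V' ⟨-, -, -, -, h1, h2, -⟩
    refine ENNReal.add_ne_top.2 ⟨?_, ?_⟩
    · exact ne_top_of_le_ne_top (h1 ▸ hBt) (measure_mono sdiff_subset)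
    · exact ne_top_of_le_ne_top (h2 ▸ hCt) (measure_mono sdiff_subset)
  have key : ∀ η : ℝ≥0∞, η ≠ 0 → ∃ U' V', S U' V' ∧ volume (U' \ B) + volume (V' \ C) ≤ η := by
    intro η hη
    by_contra! hcon
    have hη2 : η / 2 ≠ 0 := by simp [hη]
    obtain ⟨c1, hc1, H1⟩ := drop (n := n) ρ r hρ hη2
    obtain ⟨c2, hc2, H2⟩ := drop (n := n) ρ r' hρ hη2
    have imp : ∀ U' V', S U' V' → ∃ U'' V'', S U'' V'' ∧
        volume (U'' \ B) + volume (V'' \ C) + min c1 c2 ≤ volume (U' \ B) + volume (V' \ C) := by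
      intro U' V' hS
      have hd := hcon U' V' hS
      obtain ⟨m1, m2, s1, s2, v1, v2, hR⟩ := hS
      have step : ∀ (e : EuclideanSpace ℝ (Fin n)) (s : ℝ), ‖e‖ = 1 → 0 < s →
          (min c1 c2 ≤ volume ((B \ U') ∩ sg e s ⁻¹' (U' \ B)) ∨
           min c1 c2 ≤ volume ((C \ V') ∩ sg e s ⁻¹' (V' \ C))) → ∃ U'' V'', S U'' V'' ∧
          volume (U'' \ B) + volume (V'' \ C) + min c1 c2 ≤ volume (U' \ B) + volume (V' \ C) := by
        intro e s he hs hor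
        have d1 := Pol_drop he hs m1 (v1 ▸ hBt) r
        have d2 := Pol_drop he hs m2 (v2 ▸ hCt) r'
        refine ⟨Pol e s U', Pol e s V', ⟨Pol_meas e s m1, Pol_meas e s m2, Pol_sub he hs s1,
          Pol_sub he hs s2, (Pol_vol he s m1).trans v1, (Pol_vol he s m2).trans v2,
          hR.trans (RR_Pol hG he s m1 m2)⟩, ?_⟩
        refine le_trans ?_ (add_le_add d1 d2)
        rw [add_add_add_comm]
        gcongr
        rcases hor with h | h
        · exact h.trans le_self_add
        · exact h.trans le_add_self
      by_cases h : η / 2 ≤ volume (U' \ B)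
      · obtain ⟨e, s, he, hs, h⟩ := H1 U' m1 s1 v1 h
        exact step e s he hs (Or.inl ((min_le_left _ _).trans h))
      · have h' : η / 2 ≤ volume (V' \ C) := by
          by_contra! h'
          push Not at h
          have := add_le_add h.le h'.le
          rw [ENNReal.add_halves] at this
          exact absurd hd (not_lt.2 this)
        obtain ⟨e, s, he, hs, h⟩ := H2 V' m2 s2 v2 h'
        exact step e s he hs (Or.inr ((min_le_right _ _).trans h))
    have iter : ∀ k : ℕ, ∃ U' V', S U' V' ∧ volume (U' \ B) + volume (V' \ C) + k * min c1 c2 ≤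
        volume (U \ B) + volume (V \ C) := by
      intro k
      induction k with
      | zero => exact ⟨U, V, hS0, by simp⟩
      | succ k ih =>
        obtain ⟨U', V', hS, h⟩ := ih
        obtain ⟨U'', V'', hS', h'⟩ := imp U' V' hS
        refine ⟨U'', V'', hS', le_trans ?_ h⟩
        push_cast
        rw [add_mul, one_mul, add_comm ((k : ℝ≥0∞) * _), ← add_assoc]
        gcongr
    have hc : min c1 c2 ≠ 0 := by
      rcases min_choice c1 c2 with h | h <;> rw [h] <;> assumption
    obtain ⟨k, hk⟩ := ENNReal.exists_nat_mul_gt hc (hSd U V hS0)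
    obtain ⟨U', V', -, h⟩ := iter k
    exact absurd hk (not_lt.2 (le_add_self.trans h))
  refine ENNReal.le_of_forall_pos_le_add fun ε hε _ => ?_
  by_cases hz : ∫⁻ x, G x = 0
  · have h := RR_pert (B := B) (C := C) hG hU hV measurableSet_ball measurableSet_ball
    rw [hz, mul_zero, add_zero] at h
    exact h.trans le_self_add
  · have hε' : (ε : ℝ≥0∞) ≠ 0 := by exact_mod_cast hε.ne'
    obtain ⟨U', V', ⟨m1, m2, -, -, -, -, hR⟩, h⟩ := key (ε / ∫⁻ x, G x)
      (ENNReal.div_pos hε' hG.fin).ne'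
    refine hR.trans ((RR_pert (B := B) (C := C) hG m1 m2 measurableSet_ball measurableSet_ball).trans ?_)
    gcongr
    exact (mul_le_mul_left h _).trans (ENNReal.div_mul_cancel hz hG.fin).le

lemma ball_vol (hn : 1 ≤ n) {r : ℝ} (hr : 0 ≤ r) :
    volume (Metric.ball (0 : EuclideanSpace ℝ (Fin n)) r) =
      ENNReal.ofReal (r ^ n) * volume (Metric.ball (0 : EuclideanSpace ℝ (Fin n)) 1) := by
  have : Nonempty (Fin n) := ⟨⟨0, hn⟩⟩
  rw [Measure.addHaar_ball _ _ hr]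
  simp

lemma radius_nonneg (A : Set (EuclideanSpace ℝ (Fin n))) : 0 ≤ schwarzRadius n A := by
  unfold schwarzRadius; positivity

lemma radius_vol (hn : 1 ≤ n) {A : Set (EuclideanSpace ℝ (Fin n))} (hA : volume A ≠ ⊤) :
    volume (Metric.ball (0 : EuclideanSpace ℝ (Fin n)) (schwarzRadius n A)) = volume A := by
  have h1 : volume (Metric.ball (0 : EuclideanSpace ℝ (Fin n)) 1) ≠ 0 :=
    (Metric.measure_ball_pos _ _ one_pos).ne'
  have h2 : volume (Metric.ball (0 : EuclideanSpace ℝ (Fin n)) 1) ≠ ⊤ := measure_ball_lt_top.ne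
  rw [ball_vol hn (radius_nonneg A), schwarzRadius,
    Real.rpow_inv_natCast_pow (by positivity) (by omega),
    ENNReal.ofReal_div_of_pos (ENNReal.toReal_pos h1 h2), ENNReal.ofReal_toReal hA,
    ENNReal.ofReal_toReal h2, ENNReal.div_mul_cancel h1 h2]

lemma radius_mono {A B : Set (EuclideanSpace ℝ (Fin n))} (hB : volume B ≠ ⊤)
    (h : volume A ≤ volume B) : schwarzRadius n A ≤ schwarzRadius n B := by
  unfold schwarzRadius
  gcongr

/-- Riesz inequality for balls of the same measure. -/
lemma riesz (hn : 1 ≤ n) {G : EuclideanSpace ℝ (Fin n) → ℝ≥0∞} (hG : Ker G)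
    {U V : Set (EuclideanSpace ℝ (Fin n))} (hU : MeasurableSet U) (hV : MeasurableSet V)
    (hUt : volume U ≠ ⊤) (hVt : volume V ≠ ⊤) :
    RR G U V ≤ RR G (Metric.ball 0 (schwarzRadius n U)) (Metric.ball 0 (schwarzRadius n V)) := by
  have cov : ∀ W : Set (EuclideanSpace ℝ (Fin n)), W = ⋃ k : ℕ, W ∩ Metric.closedBall 0 k := by
    intro W
    rw [← inter_iUnion, Metric.iUnion_closedBall_nat, inter_univ]
  have mono : ∀ W : Set (EuclideanSpace ℝ (Fin n)),
      Monotone fun k : ℕ => W ∩ Metric.closedBall 0 (k : ℝ) := fun W a b hab =>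
    inter_subset_inter_right _ (Metric.closedBall_subset_closedBall (by exact_mod_cast hab))
  have tt : ∀ (W : Set (EuclideanSpace ℝ (Fin n))) (k : ℕ), volume W ≠ ⊤ →
      volume (W ∩ Metric.closedBall 0 (k : ℝ)) ≠ ⊤ := fun W k h =>
    ne_top_of_le_ne_top h (measure_mono inter_subset_left)
  rw [cov U, cov V, RR_iUnion hG (fun k => hU.inter measurableSet_closedBall)
    (fun k => hV.inter measurableSet_closedBall) (mono U) (mono V), ← cov U, ← cov V]
  refine iSup_le fun k => ?_
  refine (riesz_bdd hG (hU.inter measurableSet_closedBall) (hV.inter measurableSet_closedBall)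
    (Nat.cast_nonneg k) inter_subset_right inter_subset_right (radius_vol hn (tt U k hUt)).symm
    (radius_vol hn (tt V k hVt)).symm).trans ?_
  exact RR_mono (Metric.ball_subset_ball (radius_mono hUt (measure_mono inter_subset_left)))
    (Metric.ball_subset_ball (radius_mono hVt (measure_mono inter_subset_left)))

end Riesz


namespace Riesz
open Set Filter Topology ENNReal

variable {n : ℕ}

lemma tail_zero {e : EuclideanSpace ℝ (Fin n)}
    {U : Set (EuclideanSpace ℝ (Fin n))} (hU : MeasurableSet U) (hUt : volume U ≠ ⊤) :
    Tendsto (fun s : ℝ => volume (U ∩ {x | s ≤ inner ℝ x e})) atTop (𝓝 0) := by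
  have h := tendsto_measure_iInter_atTop (μ := (volume : Measure (EuclideanSpace ℝ (Fin n))))
    (s := fun s : ℝ => U ∩ {x | s ≤ inner ℝ x e})
    (fun k => (hU.inter (measurableSet_le measurable_const (by fun_prop))).nullMeasurableSet)
    (by
      intro a b hab x hx
      exact ⟨hx.1, le_trans hab hx.2⟩)
    ⟨0, ne_top_of_le_ne_top hUt (measure_mono inter_subset_left)⟩
  have h0 : (⋂ s : ℝ, U ∩ {x | s ≤ inner ℝ x e}) = ∅ := by
    ext x
    simp only [mem_iInter, mem_empty_iff_false, iff_false, not_forall]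
    refine ⟨inner ℝ x e + 1, fun hh => ?_⟩
    have : inner ℝ x e + 1 ≤ inner ℝ x e := hh.2
    linarith
  rw [h0, measure_empty] at h
  exact h

lemma AA_ineq {e : EuclideanSpace ℝ (Fin n)} (he : ‖e‖ = 1) {s : ℝ}
    {U : Set (EuclideanSpace ℝ (Fin n))} (hU : MeasurableSet U)
    (h : volume (AA e s U) = 0) {b : ℝ} (hb : b ≤ s) :
    volume (U ∩ {x | inner ℝ x e ≤ b}) ≤ volume (U ∩ {x | 2 * s - b ≤ inner ℝ x e}) := by
  have hm : MeasurableSet (U ∩ {x : EuclideanSpace ℝ (Fin n) | 2 * s - b ≤ inner ℝ x e}) :=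
    hU.inter (measurableSet_le measurable_const (by fun_prop))
  calc volume (U ∩ {x | inner ℝ x e ≤ b})
      ≤ volume (AA e s U ∪ sg e s ⁻¹' (U ∩ {x | 2 * s - b ≤ inner ℝ x e})) := by
        refine measure_mono fun x hx => ?_
        have hx2 : inner ℝ x e ≤ b := hx.2
        by_cases hs : sg e s x ∈ U
        · refine Or.inr ⟨hs, ?_⟩
          change 2 * s - b ≤ inner ℝ (sg e s x) e
          rw [inner_sg he]; linarith
        · exact Or.inl ⟨hx.1, hx2.trans hb, hs⟩
    _ ≤ _ := by
        refine (measure_union_le _ _).trans ?_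
        rw [h, zero_add, (sg_mp he s).measure_preimage hm.nullMeasurableSet]

lemma AA_all {e : EuclideanSpace ℝ (Fin n)} (he : ‖e‖ = 1)
    {U : Set (EuclideanSpace ℝ (Fin n))} (hU : MeasurableSet U) (hUt : volume U ≠ ⊤)
    (h : ∀ s, volume (AA e s U) = 0) : volume U = 0 := by
  have h1 : ∀ s : ℝ, volume U ≤ volume (U ∩ {x | s ≤ inner ℝ x e}) +
      volume (U ∩ {x | s ≤ inner ℝ x e}) := by
    intro s
    have := AA_ineq he hU (h s) le_rfl
    rw [two_mul, add_sub_cancel_right] at this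
    calc volume U ≤ volume (U ∩ {x | inner ℝ x e ≤ s} ∪ U ∩ {x | s ≤ inner ℝ x e}) := by
          refine measure_mono fun x hx => ?_
          rcases le_total (inner ℝ x e) s with h | h
          · exact Or.inl ⟨hx, h⟩
          · exact Or.inr ⟨hx, h⟩
      _ ≤ _ := (measure_union_le _ _).trans (by gcongr)
  have h2 := (tail_zero (e := e) hU hUt).add (tail_zero (e := e) hU hUt)
  rw [add_zero] at h2
  exact le_antisymm (ge_of_tendsto' h2 h1) zero_le

lemma AA_sym {e : EuclideanSpace ℝ (Fin n)} (he : ‖e‖ = 1)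
    {U : Set (EuclideanSpace ℝ (Fin n))} (hU : MeasurableSet U) (hUt : volume U ≠ ⊤)
    {s₀ s : ℝ} (hs : s₀ < s)
    (hsym : ∀ a : ℝ, volume (U ∩ {x | a ≤ inner ℝ x e}) =
      volume (U ∩ {x | inner ℝ x e ≤ 2 * s₀ - a}))
    (h : volume (AA e s U) = 0) : volume U = 0 := by
  have h1 : ∀ a : ℝ, s₀ ≤ a → volume (U ∩ {x | a ≤ inner ℝ x e}) ≤
      volume (U ∩ {x | a + 2 * (s - s₀) ≤ inner ℝ x e}) := by
    intro a ha
    rw [hsym a]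
    refine (AA_ineq he hU h (by linarith)).trans (le_of_eq ?_)
    rw [show 2 * s - (2 * s₀ - a) = a + 2 * (s - s₀) by ring]
  have h2 : ∀ k : ℕ, volume (U ∩ {x | s₀ ≤ inner ℝ x e}) ≤
      volume (U ∩ {x | s₀ + k * (2 * (s - s₀)) ≤ inner ℝ x e}) := by
    intro k
    induction k with
    | zero => simp
    | succ k ih =>
      refine ih.trans ((h1 _ ?_).trans (le_of_eq ?_))
      · have : 0 ≤ (k : ℝ) * (2 * (s - s₀)) := mul_nonneg (by positivity) (by linarith)
        linarith
      · rw [show s₀ + ((k + 1 : ℕ) : ℝ) * (2 * (s - s₀)) =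
          s₀ + k * (2 * (s - s₀)) + 2 * (s - s₀) by push_cast; ring]
  have h3 : Tendsto (fun k : ℕ => s₀ + (k : ℝ) * (2 * (s - s₀))) atTop atTop :=
    tendsto_atTop_add_const_left _ _
      (tendsto_natCast_atTop_atTop.atTop_mul_const (by linarith))
  have h4 : volume (U ∩ {x | s₀ ≤ inner ℝ x e}) = 0 :=
    le_antisymm (ge_of_tendsto' ((tail_zero (e := e) hU hUt).comp h3) h2) zero_le
  have h5 := hsym s₀
  rw [h4, two_mul, add_sub_cancel_right] at h5
  refine measure_mono_null (t := U ∩ {x | s₀ ≤ inner ℝ x e} ∪ U ∩ {x | inner ℝ x e ≤ s₀}) ?_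
    (measure_union_null h4 h5.symm)
  intro x hx
  rcases le_total (inner ℝ x e) s₀ with h | h
  · exact Or.inr ⟨hx, h⟩
  · exact Or.inl ⟨hx, h⟩

lemma AA_closed {e : EuclideanSpace ℝ (Fin n)} (he : ‖e‖ = 1)
    {U : Set (EuclideanSpace ℝ (Fin n))} (hU : MeasurableSet U) (hUt : volume U ≠ ⊤) :
    IsClosed {s : ℝ | volume (AA e s U) = 0} := by
  refine IsSeqClosed.isClosed fun t s ht hts => ?_
  have hcont : Continuous fun p : ℝ × EuclideanSpace ℝ (Fin n) => sg e p.1 p.2 := by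
    unfold sg; fun_prop
  let F : C(ℝ, C(EuclideanSpace ℝ (Fin n), EuclideanSpace ℝ (Fin n))) :=
    (ContinuousMap.mk _ hcont).curry
  have hF : ∀ s x, F s x = sg e s x := fun s x => rfl
  have h1 := tendsto_measure_symmDiff_preimage_nhds_zero
    (μ := (volume : Measure (EuclideanSpace ℝ (Fin n))))
    (ν := (volume : Measure (EuclideanSpace ℝ (Fin n))))
    (l := atTop) (f := fun k => F (t k)) (g := F s) (s := U)
    ((F.continuous.tendsto s).comp hts) (Eventually.of_forall fun k => sg_mp he (t k))
    (sg_mp he s) hU.nullMeasurableSet hUt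
  have h2 : ∀ b < s, volume (AA e s U ∩ {x | inner ℝ x e ≤ b}) = 0 := by
    intro b hb
    refine le_antisymm (ge_of_tendsto h1 ?_) zero_le
    filter_upwards [hts.eventually (lt_mem_nhds hb)] with k hk
    calc volume (AA e s U ∩ {x | inner ℝ x e ≤ b})
        ≤ volume (AA e (t k) U ∪ (symmDiff (F (t k) ⁻¹' U) (F s ⁻¹' U))) := by
          refine measure_mono fun x hx => ?_
          have hx2 : inner ℝ x e ≤ b := hx.2
          by_cases hxk : sg e (t k) x ∈ U
          · exact Or.inr (Or.inl ⟨hxk, hx.1.2.2⟩)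
          · exact Or.inl ⟨hx.1.1, hx2.trans hk.le, hxk⟩
      _ ≤ _ := by
          refine (measure_union_le _ _).trans ?_
          have : volume (AA e (t k) U) = 0 := ht k
          rw [this, zero_add]
  refine measure_mono_null (t := ⋃ k : ℕ, AA e s U ∩ {x | inner ℝ x e ≤ s - 1 / ((k : ℝ) + 1)}) ?_
    (measure_iUnion_null fun k => h2 _ (by
      have : (0 : ℝ) < 1 / ((k : ℝ) + 1) := by positivity
      linarith))
  intro x hx
  have hne : inner ℝ x e ≠ s := fun h => hx.2.2 (by rw [sg_fix h]; exact hx.1)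
  have hlt : inner ℝ x e < s := lt_of_le_of_ne hx.2.1 hne
  obtain ⟨k, hk⟩ := exists_nat_one_div_lt (sub_pos.2 hlt)
  refine mem_iUnion.2 ⟨k, hx, ?_⟩
  change inner ℝ x e ≤ s - 1 / ((k : ℝ) + 1)
  linarith

/-- Dichotomy satisfied by optimal pairs. -/
def Dich (U V : Set (EuclideanSpace ℝ (Fin n))) : Prop :=
  ∀ (e : EuclideanSpace ℝ (Fin n)) (s : ℝ), ‖e‖ = 1 →
    volume (AA e s U) = 0 ∨ volume (AA (-e) (-s) V) = 0

lemma Dich.symm {U V : Set (EuclideanSpace ℝ (Fin n))} (h : Dich U V) : Dich V U := by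
  intro e s he
  have := h (-e) (-s) (by simpa using he)
  rw [neg_neg, neg_neg] at this
  exact this.symm

/-- a.e. symmetry in a hyperplane -/
def Sym (e : EuclideanSpace ℝ (Fin n)) (s : ℝ) (U : Set (EuclideanSpace ℝ (Fin n))) : Prop :=
  volume (AA e s U) = 0 ∧ volume (AA (-e) (-s) U) = 0

lemma Sym.ae {e : EuclideanSpace ℝ (Fin n)} (he : ‖e‖ = 1) {s : ℝ}
    {U : Set (EuclideanSpace ℝ (Fin n))} (hU : MeasurableSet U) (h : Sym e s U) :
    sg e s ⁻¹' U =ᵐ[volume] U := by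
  have hne : ‖-e‖ = 1 := by simpa using he
  have a1 : volume (sg e s ⁻¹' AA e s U) = 0 := by
    rw [(sg_mp he s).measure_preimage (AA_meas e s hU).nullMeasurableSet, h.1]
  have a2 : volume (sg e s ⁻¹' AA (-e) (-s) U) = 0 := by
    rw [(sg_mp he s).measure_preimage (AA_meas _ _ hU).nullMeasurableSet, h.2]
  rw [ae_eq_set]
  constructor
  · refine measure_mono_null (t := sg e s ⁻¹' AA e s U ∪ sg e s ⁻¹' AA (-e) (-s) U) ?_
      (measure_union_null a1 a2)
    intro x hx
    have hx2 : sg e s x ∈ U := hx.1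
    rcases le_total (inner ℝ (sg e s x) e) s with hh | hh
    · exact Or.inl ⟨hx2, hh, by rw [sg_sg he]; exact hx.2⟩
    · refine Or.inr ⟨hx2, ?_, by rw [sg_neg, sg_sg he]; exact hx.2⟩
      rw [inner_neg_right]; linarith
  · refine measure_mono_null (t := AA e s U ∪ AA (-e) (-s) U) ?_ (measure_union_null h.1 h.2)
    intro x hx
    rcases le_total (inner ℝ x e) s with hh | hh
    · exact Or.inl ⟨hx.1, hh, hx.2⟩
    · refine Or.inr ⟨hx.1, ?_, by rw [sg_neg]; exact hx.2⟩
      rw [inner_neg_right]; linarith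

lemma vol_of_inv {f : EuclideanSpace ℝ (Fin n) → EuclideanSpace ℝ (Fin n)}
    (hf : MeasurePreserving f volume volume) {U : Set (EuclideanSpace ℝ (Fin n))}
    (hU : MeasurableSet U) (h : f ⁻¹' U =ᵐ[volume] U) {e : EuclideanSpace ℝ (Fin n)} {s₀ : ℝ}
    (hfe : ∀ x, inner ℝ (f x) e = 2 * s₀ - inner ℝ x e) (a : ℝ) :
    volume (U ∩ {x | a ≤ inner ℝ x e}) = volume (U ∩ {x | inner ℝ x e ≤ 2 * s₀ - a}) := by
  rw [← hf.measure_preimage (hU.inter (mhalf e (2 * s₀ - a))).nullMeasurableSet, preimage_inter]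
  have : f ⁻¹' {x | inner ℝ x e ≤ 2 * s₀ - a} = {x | a ≤ inner ℝ x e} := by
    ext x
    simp only [mem_preimage, mem_ofPred_eq, hfe]
    constructor <;> intro h <;> linarith
  rw [this]
  exact measure_congr (h.symm.inter (ae_eq_refl _))

lemma Sym.vol {e : EuclideanSpace ℝ (Fin n)} (he : ‖e‖ = 1) {s : ℝ}
    {U : Set (EuclideanSpace ℝ (Fin n))} (hU : MeasurableSet U) (h : Sym e s U) (a : ℝ) :
    volume (U ∩ {x | a ≤ inner ℝ x e}) = volume (U ∩ {x | inner ℝ x e ≤ 2 * s - a}) :=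
  vol_of_inv (sg_mp he s) hU (h.ae he hU) (inner_sg he s) a

lemma Sym.neg {e : EuclideanSpace ℝ (Fin n)} {s : ℝ}
    {U : Set (EuclideanSpace ℝ (Fin n))} (h : Sym e s U) : Sym (-e) (-s) U := by
  refine ⟨h.2, ?_⟩
  rw [neg_neg, neg_neg]; exact h.1

lemma sym_transfer {e : EuclideanSpace ℝ (Fin n)} (he : ‖e‖ = 1) {s₀ : ℝ}
    {U V : Set (EuclideanSpace ℝ (Fin n))} (hU : MeasurableSet U) (hV : MeasurableSet V)
    (hUt : volume U ≠ ⊤) (hVt : volume V ≠ ⊤) (hV0 : volume V ≠ 0)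
    (hD : Dich U V) (h : Sym e s₀ V) : Sym e s₀ U := by
  have key : ∀ (e : EuclideanSpace ℝ (Fin n)) (s₀ : ℝ), ‖e‖ = 1 → Sym e s₀ V →
      volume (AA e s₀ U) = 0 := by
    intro e s₀ he h
    have hcl := AA_closed he hU hUt
    refine hcl.mem_of_tendsto (b := 𝓝[<] s₀) (f := fun s : ℝ => s) (x := s₀)
      (tendsto_id'.2 nhdsWithin_le_nhds) ?_
    filter_upwards [self_mem_nhdsWithin] with s hs
    rcases hD e s he with h1 | h1
    · exact h1
    · exact absurd (AA_sym (by simpa using he) hV hVt (neg_lt_neg hs)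
        (h.neg.vol (by simpa using he) hV) h1) hV0
  exact ⟨key e s₀ he h, key (-e) (-s₀) (by simpa using he) h.neg⟩

lemma exists_sym {e : EuclideanSpace ℝ (Fin n)} (he : ‖e‖ = 1)
    {U V : Set (EuclideanSpace ℝ (Fin n))} (hU : MeasurableSet U) (hV : MeasurableSet V)
    (hUt : volume U ≠ ⊤) (hVt : volume V ≠ ⊤) (hU0 : volume U ≠ 0) (hV0 : volume V ≠ 0)
    (hD : Dich U V) : ∃ s₀, Sym e s₀ U ∧ Sym e s₀ V := by
  have hne : ‖-e‖ = 1 := by simpa using he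
  by_cases h : ∃ s, Sym e s V
  · obtain ⟨s, hs⟩ := h
    exact ⟨s, sym_transfer he hU hV hUt hVt hV0 hD hs, hs⟩
  by_cases h' : ∃ s, Sym e s U
  · obtain ⟨s, hs⟩ := h'
    exact ⟨s, hs, sym_transfer he hV hU hVt hUt hU0 hD.symm hs⟩
  exfalso
  push Not at h h'
  have hcl := AA_closed he hV hVt
  have hcl' : IsClosed {s : ℝ | volume (AA (-e) (-s) V) = 0} :=
    (AA_closed hne hV hVt).preimage continuous_neg
  have hcompl : {s : ℝ | volume (AA e s V) = 0}ᶜ = {s : ℝ | volume (AA (-e) (-s) V) = 0} := by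
    ext s
    simp only [mem_compl_iff, mem_ofPred_eq]
    constructor
    · intro a
      have b := (hD.symm e s he).resolve_left a
      have c : ¬ volume (AA e s U) = 0 := fun c => h' s ⟨c, b⟩
      exact (hD e s he).resolve_left c
    · intro a b
      exact h s ⟨b, a⟩
  have hclop : IsClopen {s : ℝ | volume (AA e s V) = 0} :=
    ⟨hcl, isClosed_compl_iff.1 (by rw [hcompl]; exact hcl')⟩
  rcases isClopen_iff.1 hclop with h0 | h0
  · rw [h0, compl_empty] at hcompl
    refine hV0 (AA_all hne hV hVt fun s => ?_)
    have : -s ∈ {s : ℝ | volume (AA (-e) (-s) V) = 0} := hcompl ▸ mem_univ _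
    simpa using this
  · refine hV0 (AA_all he hV hVt fun s => ?_)
    have : s ∈ {s : ℝ | volume (AA e s V) = 0} := h0 ▸ mem_univ _
    exact this

end Riesz


namespace Riesz
open Set Filter Topology ENNReal

variable {n : ℕ}

lemma opt_dich (hn : 1 ≤ n) {G : EuclideanSpace ℝ (Fin n) → ℝ≥0∞} (hG : Ker G)
    {U V : Set (EuclideanSpace ℝ (Fin n))} (hU : MeasurableSet U) (hV : MeasurableSet V)
    (hUt : volume U ≠ ⊤) (hVt : volume V ≠ ⊤)
    (hopt : RR G (Metric.ball 0 (schwarzRadius n U)) (Metric.ball 0 (schwarzRadius n V)) ≤ RR G U V) :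
    Dich U V := by
  intro e s he
  have v1 := Pol_vol he s hU
  have v2 := Pol_vol he s hV
  refine RR_Pol_eq hG he s hU hV (RR_ne_top hG hU hV hUt) (le_trans ?_ hopt)
  refine (riesz hn hG (Pol_meas e s hU) (Pol_meas e s hV) (v1 ▸ hUt) (v2 ▸ hVt)).trans (le_of_eq ?_)
  simp only [schwarzRadius, v1, v2]

lemma central {U V : Set (EuclideanSpace ℝ (Fin n))} (hU : MeasurableSet U) (hV : MeasurableSet V)
    (hUt : volume U ≠ ⊤) (hVt : volume V ≠ ⊤) (hU0 : volume U ≠ 0) (hV0 : volume V ≠ 0)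
    (hD : Dich U V) : ∃ z : EuclideanSpace ℝ (Fin n),
      ∃ f : EuclideanSpace ℝ (Fin n) → EuclideanSpace ℝ (Fin n),
      MeasurePreserving f volume volume ∧ f ⁻¹' U =ᵐ[volume] U ∧ f ⁻¹' V =ᵐ[volume] V ∧
      ∀ x, f x = (2 : ℝ) • z - x := by
  have hunit : ∀ i : Fin n, ‖(EuclideanSpace.single i (1 : ℝ))‖ = 1 := fun i => by simp
  choose s hsU hsV using fun i : Fin n => exists_sym (hunit i) hU hV hUt hVt hU0 hV0 hD
  have ind : ∀ S : Finset (Fin n), ∃ f : EuclideanSpace ℝ (Fin n) → EuclideanSpace ℝ (Fin n),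
      MeasurePreserving f volume volume ∧ f ⁻¹' U =ᵐ[volume] U ∧ f ⁻¹' V =ᵐ[volume] V ∧
      ∀ x i, f x i = if i ∈ S then 2 * s i - x i else x i := by
    intro S
    induction S using Finset.induction_on with
    | empty => exact ⟨id, MeasurePreserving.id _, ae_eq_refl _, ae_eq_refl _, by simp⟩
    | insert j S hj ih =>
      obtain ⟨f, hf, h1, h2, h3⟩ := ih
      refine ⟨sg (EuclideanSpace.single j 1) (s j) ∘ f, (sg_mp (hunit j) (s j)).comp hf, ?_, ?_, ?_⟩
      · rw [preimage_comp]
        exact (hf.quasiMeasurePreserving.preimage_ae_eq ((hsU j).ae (hunit j) hU)).trans h1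
      · rw [preimage_comp]
        exact (hf.quasiMeasurePreserving.preimage_ae_eq ((hsV j).ae (hunit j) hV)).trans h2
      · intro x i
        have hfj : f x j = x j := by rw [h3, if_neg hj]
        by_cases hij : i = j
        · subst hij
          simp [sg, EuclideanSpace.inner_single_right, hfj]
          ring
        · simp [sg, hij, h3]
  obtain ⟨f, hf, h1, h2, h3⟩ := ind Finset.univ
  refine ⟨WithLp.toLp 2 s, f, hf, h1, h2, fun x => ?_⟩
  ext i
  simp [h3]

lemma ball_of_AA {V : Set (EuclideanSpace ℝ (Fin n))} (hV : MeasurableSet V)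
    (hVt : volume V ≠ ⊤) {r : ℝ}
    (hr : volume V = volume (Metric.ball (0 : EuclideanSpace ℝ (Fin n)) r))
    (h : ∀ (e : EuclideanSpace ℝ (Fin n)) (s : ℝ), ‖e‖ = 1 → 0 < s → volume (AA (-e) (-s) V) = 0) :
    V =ᵐ[volume] Metric.ball (0 : EuclideanSpace ℝ (Fin n)) r := by
  have hc := diff_comm_vol hV measurableSet_ball hr hVt
  by_cases hQ : volume (V \ Metric.ball 0 r) = 0
  · exact ae_eq_set.2 ⟨hQ, hc.trans hQ⟩
  exfalso
  have hQt : volume (V \ Metric.ball 0 r) ≠ ⊤ := ne_top_of_le_ne_top hVt (measure_mono sdiff_subset)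
  obtain ⟨ε, hε, hsh⟩ := thin_shell (n := n) r (η := volume (V \ Metric.ball 0 r) / 2) (by simp [hQ])
  have hP : volume (Metric.ball 0 (r - ε) \ V) ≠ 0 := by
    intro h0
    have : volume (Metric.ball 0 r \ V) ≤ volume (V \ Metric.ball 0 r) / 2 := by
      calc volume (Metric.ball 0 r \ V)
          ≤ volume ((Metric.ball 0 (r - ε) \ V) ∪ (Metric.ball 0 r \ Metric.ball 0 (r - ε))) := by
            refine measure_mono fun x hx => ?_
            by_cases h : x ∈ Metric.ball 0 (r - ε)
            · exact Or.inl ⟨h, hx.2⟩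
            · exact Or.inr ⟨hx.1, h⟩
        _ ≤ _ := (measure_union_le _ _).trans (by rw [h0, zero_add]; exact hsh)
    rw [hc] at this
    exact absurd this (not_le.2 (ENNReal.half_lt_self hQ hQt))
  obtain ⟨k, hk⟩ : ∃ k : ℕ, volume ((V \ Metric.ball 0 r) ∩ Metric.closedBall 0 (k : ℝ)) ≠ 0 := by
    by_contra! hcon
    refine hQ (measure_mono_null ?_ (measure_iUnion_null hcon))
    rw [← inter_iUnion, Metric.iUnion_closedBall_nat, inter_univ]
  obtain ⟨c, hc0, H⟩ := avg n hε ((Nat.cast_nonneg k).trans (le_max_left (k : ℝ) r))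
  obtain ⟨e, s, he, hs, h1⟩ := H (Metric.ball 0 (r - ε) \ V)
    ((V \ Metric.ball 0 r) ∩ Metric.closedBall 0 (k : ℝ))
    (measurableSet_ball.diff hV) ((hV.diff measurableSet_ball).inter measurableSet_closedBall)
    (fun x hx => by
      have := mem_ball_zero_iff.1 hx.1
      rw [mem_closedBall_zero_iff]
      have := le_max_right (k : ℝ) r
      linarith)
    (fun x hx => Metric.closedBall_subset_closedBall (le_max_left (k : ℝ) r) hx.2)
    (fun x hx y hy => by
      have h1 := mem_ball_zero_iff.1 hx.1
      have h2 : ¬ ‖y‖ < r := fun h => hy.1.2 (mem_ball_zero_iff.2 h)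
      linarith)
    (mul_ne_zero hP hk)
  have h2 : volume (sg e s ⁻¹' AA (-e) (-s) V) = 0 := by
    rw [(sg_mp he s).measure_preimage (AA_meas _ _ hV).nullMeasurableSet, h e s he hs]
  have h3 : volume (Metric.ball 0 (r - ε) \ V ∩ sg e s ⁻¹'
      ((V \ Metric.ball 0 r) ∩ Metric.closedBall 0 (k : ℝ))) = 0 := by
    refine measure_mono_null ?_ h2
    rintro x ⟨⟨hx1, hx2⟩, ⟨hx3, hx4⟩, -⟩
    refine ⟨hx3, ?_, by rw [sg_neg, sg_sg he]; exact hx2⟩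
    have a1 := mem_ball_zero_iff.1 hx1
    have a2 : r ≤ ‖sg e s x‖ := not_lt.1 fun h => hx4 (mem_ball_zero_iff.2 h)
    have a3 := norm_sq_sg he s x
    have a4 : ‖x‖ ^ 2 < ‖sg e s x‖ ^ 2 := by
      apply pow_lt_pow_left₀ _ (norm_nonneg _) two_ne_zero
      linarith
    have a5 : 0 < s - inner ℝ x e := by
      by_contra! hcon
      nlinarith [mul_nonneg hs.le (neg_nonneg.2 hcon)]
    rw [inner_neg_right, inner_sg he]
    linarith
  rw [h3] at h1
  exact mul_ne_zero hc0 (mul_ne_zero hP hk) (le_antisymm h1 zero_le)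

lemma sg_add (e : EuclideanSpace ℝ (Fin n)) (s : ℝ) (x z : EuclideanSpace ℝ (Fin n)) :
    sg e s x + z = sg e (s + inner ℝ z e) (x + z) := by
  unfold sg
  rw [inner_add_left, show s + inner ℝ z e - (inner ℝ x e + inner ℝ z e) = s - inner ℝ x e by ring]
  abel

lemma ball_of_AA' {V : Set (EuclideanSpace ℝ (Fin n))} (hV : MeasurableSet V)
    (hVt : volume V ≠ ⊤) {r : ℝ} {z : EuclideanSpace ℝ (Fin n)}
    (hr : volume V = volume (Metric.ball (0 : EuclideanSpace ℝ (Fin n)) r))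
    (h : ∀ (e : EuclideanSpace ℝ (Fin n)) (s : ℝ), ‖e‖ = 1 → inner ℝ z e < s →
      volume (AA (-e) (-s) V) = 0) :
    V =ᵐ[volume] (fun x => x + -z) ⁻¹' Metric.ball (0 : EuclideanSpace ℝ (Fin n)) r := by
  have m := measurePreserving_add_right (volume : Measure (EuclideanSpace ℝ (Fin n))) z
  have m' := measurePreserving_add_right (volume : Measure (EuclideanSpace ℝ (Fin n))) (-z)
  have v : volume ((fun x => x + z) ⁻¹' V) = volume V := m.measure_preimage hV.nullMeasurableSet
  have key : (fun x => x + z) ⁻¹' V =ᵐ[volume] Metric.ball (0 : EuclideanSpace ℝ (Fin n)) r := by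
    refine ball_of_AA (m.measurable hV) (v ▸ hVt) (v.trans hr) fun e s he hs => ?_
    have : AA (-e) (-s) ((fun x => x + z) ⁻¹' V) =
        (fun x => x + z) ⁻¹' AA (-e) (-(s + inner ℝ z e)) V := by
      ext x
      simp only [AA, mem_preimage, mem_ofPred_eq, sg_neg, sg_add, inner_neg_right, inner_add_left]
      have : -inner ℝ x e ≤ -s ↔ -(inner ℝ x e + inner ℝ z e) ≤ -(s + inner ℝ z e) := by
        constructor <;> intro h <;> linarith
      rw [this]
    rw [this, m.measure_preimage (AA_meas _ _ hV).nullMeasurableSet]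
    exact h e _ he (by linarith)
  have h2 := m'.quasiMeasurePreserving.preimage_ae_eq key
  rw [← preimage_comp] at h2
  have : (fun x => x + z) ∘ (fun x : EuclideanSpace ℝ (Fin n) => x + -z) = id := by
    funext x; simp
  rw [this, preimage_id] at h2
  exact h2

/-- Equality case of the Riesz inequality. -/
lemma riesz_eq (hn : 1 ≤ n) {G : EuclideanSpace ℝ (Fin n) → ℝ≥0∞} (hG : Ker G)
    {U V : Set (EuclideanSpace ℝ (Fin n))} (hU : MeasurableSet U) (hV : MeasurableSet V)
    (hUt : volume U ≠ ⊤) (hVt : volume V ≠ ⊤) (hU0 : volume U ≠ 0) (hV0 : volume V ≠ 0)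
    (hopt : RR G (Metric.ball 0 (schwarzRadius n U)) (Metric.ball 0 (schwarzRadius n V)) ≤ RR G U V) :
    ∃ z : EuclideanSpace ℝ (Fin n),
      U =ᵐ[volume] (fun x => x + z) ⁻¹' Metric.ball 0 (schwarzRadius n U) ∧
      V =ᵐ[volume] (fun x => x + z) ⁻¹' Metric.ball 0 (schwarzRadius n V) := by
  have hD := opt_dich hn hG hU hV hUt hVt hopt
  obtain ⟨z, f, hf, h1, h2, h3⟩ := central hU hV hUt hVt hU0 hV0 hD
  have hfe : ∀ e x, inner ℝ (f x) e = 2 * inner ℝ z e - inner ℝ x e := by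
    intro e x
    rw [h3, inner_sub_left, inner_smul_left]; simp
  refine ⟨-z, ball_of_AA' hU hUt (radius_vol hn hUt).symm fun e s he hs => ?_,
    ball_of_AA' hV hVt (radius_vol hn hVt).symm fun e s he hs => ?_⟩
  · exact (hD.symm e s he).resolve_left fun h0 =>
      hV0 (AA_sym he hV hVt hs (vol_of_inv hf hV h2 (hfe e)) h0)
  · exact (hD e s he).resolve_left fun h0 =>
      hU0 (AA_sym he hU hUt hs (vol_of_inv hf hU h1 (hfe e)) h0)

end Riesz


namespace Riesz
open Set Filter Topology ENNReal

variable {n : ℕ}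

/-- The kernel associated with `g`, with value `⊤` at the origin. -/
noncomputable def gk (g : EuclideanSpace ℝ (Fin n) → ℝ) (x : EuclideanSpace ℝ (Fin n)) : ℝ≥0∞ :=
  open Classical in if x = 0 then ⊤ else ENNReal.ofReal (g x)

lemma ae_ne (hn : 1 ≤ n) (z : EuclideanSpace ℝ (Fin n)) :
    ∀ᵐ x : EuclideanSpace ℝ (Fin n), x ≠ z := by
  have : Nonempty (Fin n) := ⟨⟨0, hn⟩⟩
  rw [ae_iff]; simp

lemma gk_ker (hn : 1 ≤ n)
    {g : EuclideanSpace ℝ (Fin n) → ℝ} (hgint : Integrable g) (hgnonneg : ∀ x, 0 ≤ g x)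
    {g₀ : ℝ → ℝ} (hg₀ : StrictAntiOn g₀ (Set.Ioi 0)) (hgrad : ∀ x, g x = g₀ ‖x‖) :
    Ker (gk g) := by
  have hrad : ∀ x y : EuclideanSpace ℝ (Fin n), ‖x‖ = ‖y‖ → gk g x = gk g y := by
    intro x y h
    by_cases hx : x = 0
    · subst hx
      have : y = 0 := by rw [← norm_eq_zero, ← h, norm_zero]
      rw [this]
    · have hy : y ≠ 0 := by
        rintro rfl
        exact hx (by rw [← norm_eq_zero, h, norm_zero])
      simp [gk, hx, hy, hgrad, h]
  have hstr : ∀ x y : EuclideanSpace ℝ (Fin n), ‖x‖ < ‖y‖ → gk g y < gk g x := by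
    intro x y h
    have hy : y ≠ 0 := by
      rintro rfl
      rw [norm_zero] at h
      exact absurd h (not_lt.2 (norm_nonneg _))
    by_cases hx : x = 0
    · simp [gk, hx, hy]
    · simp only [gk, hx, hy, if_false]
      have : g y < g x := by
        rw [hgrad, hgrad]
        exact hg₀ (norm_pos_iff.2 hx) (norm_pos_iff.2 hy) h
      exact (ENNReal.ofReal_lt_ofReal_iff ((hgnonneg y).trans_lt this)).2 this
  refine ⟨?_, fun {x y} h => hrad x y h, fun {x y} h => hstr x y h, ?_⟩
  · refine measurable_of_Ioi fun a => ?_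
    have : gk g ⁻¹' Ioi a = norm ⁻¹' {t : ℝ | ∃ x, a < gk g x ∧ t ≤ ‖x‖} := by
      ext y
      simp only [mem_preimage, mem_Ioi, mem_ofPred_eq]
      constructor
      · intro h; exact ⟨y, h, le_rfl⟩
      · rintro ⟨x, h1, h2⟩
        rcases h2.eq_or_lt with h | h
        · rwa [hrad y x h]
        · exact h1.trans (hstr y x h)
    rw [this]
    refine measurable_norm (OrdConnected.measurableSet ⟨?_⟩)
    rintro s ⟨x, h1, h2⟩ t ⟨y, h3, h4⟩ r hr
    exact ⟨y, h3, hr.2.trans h4⟩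
  · have : ∫⁻ x, gk g x = ∫⁻ x, ENNReal.ofReal (g x) := by
      refine lintegral_congr_ae ?_
      filter_upwards [ae_ne hn 0] with x hx
      simp [gk, hx]
    rw [this]
    exact hgint.lintegral_lt_top.ne

lemma layer {a b : ℝ} (ha : 0 ≤ a) (hb : 0 ≤ b) :
    ∫⁻ τ in Ioi (0 : ℝ), (Ico (min a b) (max a b)).indicator (1 : ℝ → ℝ≥0∞) τ =
      ENNReal.ofReal |a - b| := by
  rw [Measure.restrict_congr_set Ioi_ae_eq_Ici, lintegral_indicator_one measurableSet_Ico,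
    Measure.restrict_apply measurableSet_Ico,
    inter_eq_left.2 (show Ico (min a b) (max a b) ⊆ Ici 0 from fun x hx => le_trans (le_min ha hb) hx.1),
    Real.volume_Ico, max_sub_min_eq_abs]
  rw [abs_sub_comm]

/-- slice functional -/
noncomputable def Phi (G : EuclideanSpace ℝ (Fin n) → ℝ≥0∞) (a b : EuclideanSpace ℝ (Fin n) → ℝ)
    (τ : ℝ) : ℝ≥0∞ :=
  ∫⁻ p : EuclideanSpace ℝ (Fin n) × EuclideanSpace ℝ (Fin n),
    (Ico (min (a p.1) (b p.2)) (max (a p.1) (b p.2))).indicator (1 : ℝ → ℝ≥0∞) τ * G (p.1 - p.2)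
    ∂(volume.prod volume)

lemma Phi_int_meas {G : EuclideanSpace ℝ (Fin n) → ℝ≥0∞} (hG : Ker G)
    {a b : EuclideanSpace ℝ (Fin n) → ℝ} (ha : Measurable a) (hb : Measurable b) :
    Measurable fun q : (EuclideanSpace ℝ (Fin n) × EuclideanSpace ℝ (Fin n)) × ℝ =>
      (Ico (min (a q.1.1) (b q.1.2)) (max (a q.1.1) (b q.1.2))).indicator (1 : ℝ → ℝ≥0∞) q.2 *
        G (q.1.1 - q.1.2) := by
  refine Measurable.mul ?_ (hG.meas.comp (by fun_prop))
  have hm : MeasurableSet {q : (EuclideanSpace ℝ (Fin n) × EuclideanSpace ℝ (Fin n)) × ℝ |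
      min (a q.1.1) (b q.1.2) ≤ q.2 ∧ q.2 < max (a q.1.1) (b q.1.2)} :=
    MeasurableSet.inter
      (measurableSet_le (f := fun q : (EuclideanSpace ℝ (Fin n) × EuclideanSpace ℝ (Fin n)) × ℝ =>
        min (a q.1.1) (b q.1.2)) (g := fun q => q.2) (by fun_prop) (by fun_prop))
      (measurableSet_lt (f := fun q : (EuclideanSpace ℝ (Fin n) × EuclideanSpace ℝ (Fin n)) × ℝ =>
        q.2) (g := fun q => max (a q.1.1) (b q.1.2)) (by fun_prop) (by fun_prop))
  exact (measurable_const (a := (1 : ℝ≥0∞))).indicator hm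

lemma Phi_meas {G : EuclideanSpace ℝ (Fin n) → ℝ≥0∞} (hG : Ker G)
    {a b : EuclideanSpace ℝ (Fin n) → ℝ} (ha : Measurable a) (hb : Measurable b) :
    Measurable (Phi G a b) :=
  (Phi_int_meas hG ha hb).lintegral_prod_left'

lemma dbl (hn : 1 ≤ n) {g : EuclideanSpace ℝ (Fin n) → ℝ} (hG : Ker (gk g))
    {a b : EuclideanSpace ℝ (Fin n) → ℝ} (ha : Measurable a) (hb : Measurable b)
    (ha0 : ∀ x, 0 ≤ a x) (hb0 : ∀ x, 0 ≤ b x) :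
    (∫⁻ x, ∫⁻ y, ENNReal.ofReal (|a x - b y| * g (x - y))) =
      ∫⁻ τ in Ioi (0 : ℝ), Phi (gk g) a b τ := by
  have h1 : (∫⁻ x, ∫⁻ y, ENNReal.ofReal (|a x - b y| * g (x - y))) =
      ∫⁻ x, ∫⁻ y, ENNReal.ofReal |a x - b y| * gk g (x - y) := by
    refine lintegral_congr fun x => lintegral_congr_ae ?_
    filter_upwards [ae_ne hn x] with y hy
    have : x - y ≠ 0 := sub_ne_zero.2 hy.symm
    simp [gk, this, ENNReal.ofReal_mul (abs_nonneg _)]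
  have hm : Measurable fun p : EuclideanSpace ℝ (Fin n) × EuclideanSpace ℝ (Fin n) =>
      ENNReal.ofReal |a p.1 - b p.2| * gk g (p.1 - p.2) := by
    refine Measurable.mul (by fun_prop) (hG.meas.comp (by fun_prop))
  rw [h1, lintegral_lintegral (f := fun x y => ENNReal.ofReal |a x - b y| * gk g (x - y))
    hm.aemeasurable]
  unfold Phi
  rw [← lintegral_lintegral_swap (Phi_int_meas hG ha hb).aemeasurable]
  refine lintegral_congr fun p => ?_
  rw [lintegral_mul_const _ (measurable_one.indicator measurableSet_Ico), layer (ha0 _) (hb0 _)]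

lemma RR_univ {G : EuclideanSpace ℝ (Fin n) → ℝ≥0∞} (hG : Ker G)
    {U : Set (EuclideanSpace ℝ (Fin n))} (hU : MeasurableSet U) :
    RR G U univ = volume U * ∫⁻ x, G x := by
  rw [RR, lintegral_prod _ (FF_meas hG hU MeasurableSet.univ).aemeasurable]
  have : ∀ x, ∫⁻ y, FF G U univ (x, y) = U.indicator (fun _ => ∫⁻ z, G z) x := by
    intro x
    by_cases hx : x ∈ U
    · simp only [FF, hx, indicator_of_mem, mem_prod, mem_univ, and_self]
      exact lintegral_sub_left_eq_self G x
    · simp [FF, hx]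
  simp_rw [this]
  rw [lintegral_indicator hU, lintegral_const, Measure.restrict_apply_univ, mul_comm]

lemma Phi_RR {G : EuclideanSpace ℝ (Fin n) → ℝ≥0∞} (hG : Ker G)
    {a b : EuclideanSpace ℝ (Fin n) → ℝ} (ha : Measurable a) (hb : Measurable b) (τ : ℝ) :
    Phi G a b τ + (RR G {x | τ < a x} {x | τ < b x} + RR G {x | τ < a x} {x | τ < b x}) =
      (volume {x | τ < a x} + volume {x | τ < b x}) * ∫⁻ x, G x := by
  have mU : MeasurableSet {x | τ < a x} := measurableSet_lt measurable_const ha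
  have mV : MeasurableSet {x | τ < b x} := measurableSet_lt measurable_const hb
  rw [add_mul, ← RR_univ hG mU, ← RR_univ hG mV, RR_symm hG mV MeasurableSet.univ]
  have f1 := FF_meas hG mU mV
  have f2 := FF_meas hG mU MeasurableSet.univ
  have f11 : Measurable fun p => FF G {x | τ < a x} {x | τ < b x} p +
    FF G {x | τ < a x} {x | τ < b x} p := f1.add f1
  unfold RR Phi
  rw [← lintegral_add_left f1, ← lintegral_add_right _ f11, ← lintegral_add_left f2]
  refine lintegral_congr fun p => ?_
  by_cases h1 : τ < a p.1 <;> by_cases h2 : τ < b p.2 <;>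
    simp [FF, indicator, h1, h2, not_lt.1, not_le.2]

end Riesz


namespace Riesz
open Set Filter Topology ENNReal

variable {n : ℕ}

lemma lt_radius_iff (hn : 1 ≤ n) {A : Set (EuclideanSpace ℝ (Fin n))} (hA : volume A ≠ ⊤)
    {ρ : ℝ} (hρ : 0 ≤ ρ) : ρ < schwarzRadius n A ↔
      volume (Metric.ball (0 : EuclideanSpace ℝ (Fin n)) ρ) < volume A := by
  rw [← radius_vol hn hA]
  constructor
  · intro h
    rw [ball_vol hn hρ, ball_vol hn (radius_nonneg A)]
    have h1 : volume (Metric.ball (0 : EuclideanSpace ℝ (Fin n)) 1) ≠ 0 :=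
      (Metric.measure_ball_pos _ _ one_pos).ne'
    have h2 : volume (Metric.ball (0 : EuclideanSpace ℝ (Fin n)) 1) ≠ ⊤ := measure_ball_lt_top.ne
    refine (ENNReal.mul_lt_mul_iff_left h1 h2).2 ?_
    have := pow_lt_pow_left₀ h hρ (by omega : n ≠ 0)
    exact (ENNReal.ofReal_lt_ofReal_iff ((pow_nonneg hρ n).trans_lt this)).2 this
  · intro h
    by_contra! hcon
    exact absurd h (not_lt.2 (measure_mono (Metric.ball_subset_ball hcon)))

lemma lev_iUnion (u : EuclideanSpace ℝ (Fin n) → ℝ) (τ : ℝ) :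
    {x | τ < u x} = ⋃ k : ℕ, {x | τ + 1 / ((k : ℝ) + 1) < u x} := by
  ext x
  simp only [mem_ofPred_eq, mem_iUnion]
  constructor
  · intro h
    obtain ⟨k, hk⟩ := exists_nat_one_div_lt (sub_pos.2 h)
    exact ⟨k, by linarith⟩
  · rintro ⟨k, hk⟩
    have : (0 : ℝ) < 1 / ((k : ℝ) + 1) := by positivity
    linarith

lemma lev_mono (u : EuclideanSpace ℝ (Fin n) → ℝ) (τ : ℝ) :
    Monotone fun k : ℕ => {x | τ + 1 / ((k : ℝ) + 1) < u x} := by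
  intro a b hab x hx
  have h1 := Nat.one_div_le_one_div (α := ℝ) hab
  have h2 : τ + 1 / ((a : ℝ) + 1) < u x := hx
  change τ + 1 / ((b : ℝ) + 1) < u x
  linarith

lemma lev_sup (u : EuclideanSpace ℝ (Fin n) → ℝ) (τ : ℝ) :
    volume {x | τ < u x} = ⨆ k : ℕ, volume {x | τ + 1 / ((k : ℝ) + 1) < u x} := by
  rw [lev_iUnion u τ, (lev_mono u τ).measure_iUnion]

lemma lev_anti (u : EuclideanSpace ℝ (Fin n) → ℝ) {s t : ℝ} (h : s ≤ t) :
    {x | t < u x} ⊆ {x | s < u x} := fun _ hx => lt_of_le_of_lt h hx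

lemma ball_iUnion (hn : 1 ≤ n) {u : EuclideanSpace ℝ (Fin n) → ℝ}
    (huτ : ∀ τ : ℝ, 0 < τ → volume {x | τ < u x} < ⊤) {τ : ℝ} (hτ : 0 < τ) :
    Metric.ball (0 : EuclideanSpace ℝ (Fin n)) (schwarzRadius n {x | τ < u x}) =
      ⋃ k : ℕ, Metric.ball 0 (schwarzRadius n {x | τ + 1 / ((k : ℝ) + 1) < u x}) := by
  ext x
  have hk : ∀ k : ℕ, 0 < τ + 1 / ((k : ℝ) + 1) := fun k => by positivity
  simp only [mem_iUnion, mem_ball_zero_iff]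
  rw [lt_radius_iff hn (huτ τ hτ).ne (norm_nonneg x), lev_sup u τ, lt_iSup_iff]
  refine exists_congr fun k => ?_
  rw [lt_radius_iff hn (huτ _ (hk k)).ne (norm_nonneg x)]

lemma lev_decay {u : EuclideanSpace ℝ (Fin n) → ℝ} (hu : Measurable u)
    (huτ : ∀ τ : ℝ, 0 < τ → volume {x | τ < u x} < ⊤) {η : ℝ≥0∞} (hη : η ≠ 0) :
    ∃ t : ℝ, 0 < t ∧ volume {x | t < u x} ≤ η := by
  have h := tendsto_measure_iInter_atTop (μ := (volume : Measure (EuclideanSpace ℝ (Fin n))))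
    (s := fun k : ℕ => {x | (k : ℝ) + 1 < u x})
    (fun k => (measurableSet_lt measurable_const hu).nullMeasurableSet)
    (fun a b hab => lev_anti u (by gcongr))
    ⟨0, (huτ _ (by positivity)).ne⟩
  have h0 : (⋂ k : ℕ, {x | (k : ℝ) + 1 < u x}) = ∅ := by
    ext x
    simp only [mem_iInter, mem_empty_iff_false, iff_false, not_forall]
    obtain ⟨k, hk⟩ := exists_nat_gt (u x)
    refine ⟨k, fun hh => ?_⟩
    have : (k : ℝ) + 1 < u x := hh
    linarith
  rw [h0, measure_empty] at h
  obtain ⟨k, hk⟩ := (h.eventually (gt_mem_nhds (pos_iff_ne_zero.2 hη))).exists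
  exact ⟨(k : ℝ) + 1, by positivity, hk.le⟩

lemma rearr_eq {u : EuclideanSpace ℝ (Fin n) → ℝ} (hu0 : ∀ x, 0 ≤ u x)
    (x : EuclideanSpace ℝ (Fin n)) : schwarzRearr n u x =
      ∫ t in Ioi (0 : ℝ), {t : ℝ | ‖x‖ < schwarzRadius n {y | t < u y}}.indicator (fun _ => (1 : ℝ)) t := by
  unfold schwarzRearr schwarzSet
  simp only [abs_of_nonneg (hu0 _)]
  congr 1
  funext t
  simp [indicator, mem_ball_zero_iff]

lemma rearr_nonneg (u : EuclideanSpace ℝ (Fin n) → ℝ) (x : EuclideanSpace ℝ (Fin n)) :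
    0 ≤ schwarzRearr n u x := by
  unfold schwarzRearr
  exact integral_nonneg fun t => indicator_nonneg (fun _ _ => zero_le_one) _

lemma lt_rearr_iff (hn : 1 ≤ n) {u : EuclideanSpace ℝ (Fin n) → ℝ} (hu : Measurable u)
    (hu0 : ∀ x, 0 ≤ u x) (huτ : ∀ τ : ℝ, 0 < τ → volume {x | τ < u x} < ⊤)
    {τ : ℝ} (hτ : 0 < τ) {x : EuclideanSpace ℝ (Fin n)} (hx : x ≠ 0) :
    τ < schwarzRearr n u x ↔ ‖x‖ < schwarzRadius n {y | τ < u y} := by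
  set T : Set ℝ := {t : ℝ | ‖x‖ < schwarzRadius n {y | t < u y}} ∩ Ioi 0 with hT
  have anti : ∀ s t : ℝ, 0 < s → s ≤ t → t ∈ T → s ∈ T := by
    intro s t hs hst ht
    exact ⟨lt_of_lt_of_le ht.1 (radius_mono (huτ s hs).ne (measure_mono (lev_anti u hst))), hs⟩
  have hTm : MeasurableSet T := by
    refine OrdConnected.measurableSet ⟨?_⟩
    intro s hs t ht r hr
    exact anti r t (lt_of_lt_of_le hs.2 hr.1) hr.2 ht
  have e1 : schwarzRearr n u x = (volume T).toReal := by
    rw [rearr_eq hu0]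
    have : ∀ t ∈ Ioi (0 : ℝ), {t : ℝ | ‖x‖ < schwarzRadius n {y | t < u y}}.indicator
        (fun _ => (1 : ℝ)) t = T.indicator (fun _ => (1 : ℝ)) t := by
      intro t ht
      have ht' : 0 < t := ht
      simp [indicator, hT, ht']
    rw [setIntegral_congr_fun measurableSet_Ioi this, integral_indicator hTm,
      Measure.restrict_restrict hTm, hT, inter_assoc, inter_self, ← hT]
    simp [Measure.real]
  obtain ⟨t₀, ht₀, hd⟩ := lev_decay hu huτ
    (η := volume (Metric.ball (0 : EuclideanSpace ℝ (Fin n)) ‖x‖))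
    (Metric.measure_ball_pos _ _ (norm_pos_iff.2 hx)).ne'
  have hout : ∀ t : ℝ, 0 < t → t ∉ T → T ⊆ Ioo 0 t := by
    intro t ht hnt s hs
    refine ⟨hs.2, ?_⟩
    by_contra! hcon
    exact hnt (anti t s ht hcon hs)
  have hfin : volume T ≠ ⊤ := by
    have : t₀ ∉ T := fun h => absurd ((lt_radius_iff hn (huτ t₀ ht₀).ne (norm_nonneg x)).1 h.1)
      (not_lt.2 hd)
    refine ne_top_of_le_ne_top ?_ (measure_mono (hout t₀ ht₀ this))
    simp
  have e2 : ‖x‖ < schwarzRadius n {y | τ < u y} ↔ τ ∈ T := ⟨fun h => ⟨h, hτ⟩, fun h => h.1⟩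
  rw [e1, e2]
  constructor
  · intro h
    by_contra hn'
    have h1 := measure_mono (μ := volume) (hout τ hτ hn')
    rw [Real.volume_Ioo, sub_zero] at h1
    have := ENNReal.toReal_mono (by simp) h1
    rw [ENNReal.toReal_ofReal hτ.le] at this
    linarith
  · intro h
    have h1 := h.1
    rw [mem_ofPred_eq, lt_radius_iff hn (huτ τ hτ).ne (norm_nonneg x), lev_sup u τ, lt_iSup_iff] at h1
    obtain ⟨k, hk⟩ := h1
    have hp : (0 : ℝ) < 1 / ((k : ℝ) + 1) := by positivity
    have hpos : 0 < τ + 1 / ((k : ℝ) + 1) := by positivity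
    have hkT : τ + 1 / ((k : ℝ) + 1) ∈ T :=
      ⟨(lt_radius_iff hn (huτ _ hpos).ne (norm_nonneg x)).2 hk, hpos⟩
    have h2 : volume (Ioc 0 (τ + 1 / ((k : ℝ) + 1))) ≤ volume T :=
      measure_mono fun s hs => anti s _ hs.1 hs.2 hkT
    rw [Real.volume_Ioc, sub_zero] at h2
    have := ENNReal.toReal_mono hfin h2
    rw [ENNReal.toReal_ofReal hpos.le] at this
    linarith

lemma rearr_lev (hn : 1 ≤ n) {u : EuclideanSpace ℝ (Fin n) → ℝ} (hu : Measurable u)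
    (hu0 : ∀ x, 0 ≤ u x) (huτ : ∀ τ : ℝ, 0 < τ → volume {x | τ < u x} < ⊤)
    {τ : ℝ} (hτ : 0 < τ) : ({x | τ < schwarzRearr n u x} : Set (EuclideanSpace ℝ (Fin n))) =ᵐ[volume]
      Metric.ball (0 : EuclideanSpace ℝ (Fin n)) (schwarzRadius n {y | τ < u y}) := by
  filter_upwards [ae_ne hn 0] with x hx
  apply propext
  change τ < schwarzRearr n u x ↔ x ∈ Metric.ball 0 _
  rw [mem_ball_zero_iff]
  exact lt_rearr_iff hn hu hu0 huτ hτ hx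

lemma rearr_meas (hn : 1 ≤ n) {u : EuclideanSpace ℝ (Fin n) → ℝ} (hu : Measurable u)
    (hu0 : ∀ x, 0 ≤ u x) (huτ : ∀ τ : ℝ, 0 < τ → volume {x | τ < u x} < ⊤) :
    Measurable (schwarzRearr n u) := by
  have pos : ∀ τ : ℝ, 0 < τ → MeasurableSet {x | τ < schwarzRearr n u x} := by
    intro τ hτ
    have : {x | τ < schwarzRearr n u x} =
        (Metric.ball 0 (schwarzRadius n {y | τ < u y}) \ {0}) ∪ ({x | τ < schwarzRearr n u x} ∩ {0}) := by
      ext x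
      by_cases hx : x = 0
      · simp [hx]
      · simp [hx, lt_rearr_iff hn hu hu0 huτ hτ hx]
    rw [this]
    exact (measurableSet_ball.diff (measurableSet_singleton 0)).union
      ((finite_singleton _).subset inter_subset_right).measurableSet
  refine measurable_of_Ioi fun a => ?_
  change MeasurableSet {x | a < schwarzRearr n u x}
  rcases lt_or_ge a 0 with ha | ha
  · have : {x | a < schwarzRearr n u x} = univ := by
      ext x
      simpa using ha.trans_le (rearr_nonneg u x)
    rw [this]; exact MeasurableSet.univ
  · rw [lev_iUnion]
    exact MeasurableSet.iUnion fun k => pos _ (by positivity)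

end Riesz


namespace Riesz
open Set Filter Topology ENNReal

variable {n : ℕ}

/-- rearranged correlation at level `τ` -/
noncomputable def RS (G : EuclideanSpace ℝ (Fin n) → ℝ≥0∞) (u v : EuclideanSpace ℝ (Fin n) → ℝ)
    (τ : ℝ) : ℝ≥0∞ :=
  RR G (Metric.ball 0 (schwarzRadius n {x | τ < u x})) (Metric.ball 0 (schwarzRadius n {x | τ < v x}))

lemma lev_meas {u : EuclideanSpace ℝ (Fin n) → ℝ} (hu : Measurable u) (τ : ℝ) :
    MeasurableSet {x | τ < u x} := measurableSet_lt measurable_const hu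

lemma Phi_star (hn : 1 ≤ n) {G : EuclideanSpace ℝ (Fin n) → ℝ≥0∞} (hG : Ker G)
    {u v : EuclideanSpace ℝ (Fin n) → ℝ} (hu : Measurable u) (hv : Measurable v)
    (hu0 : ∀ x, 0 ≤ u x) (hv0 : ∀ x, 0 ≤ v x)
    (huτ : ∀ τ : ℝ, 0 < τ → volume {x | τ < u x} < ⊤)
    (hvτ : ∀ τ : ℝ, 0 < τ → volume {x | τ < v x} < ⊤) {τ : ℝ} (hτ : 0 < τ) :
    Phi G (schwarzRearr n u) (schwarzRearr n v) τ + (RS G u v τ + RS G u v τ) =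
      (volume {x | τ < u x} + volume {x | τ < v x}) * ∫⁻ x, G x := by
  have h := Phi_RR hG (rearr_meas hn hu hu0 huτ) (rearr_meas hn hv hv0 hvτ) τ
  have eu := rearr_lev hn hu hu0 huτ hτ
  have ev := rearr_lev hn hv hv0 hvτ hτ
  rw [RR_congr eu ev, measure_congr eu, measure_congr ev, radius_vol hn (huτ τ hτ).ne,
    radius_vol hn (hvτ τ hτ).ne] at h
  exact h

lemma RS_extend (hn : 1 ≤ n) {G : EuclideanSpace ℝ (Fin n) → ℝ≥0∞} (hG : Ker G)
    {u v : EuclideanSpace ℝ (Fin n) → ℝ}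
    (huτ : ∀ τ : ℝ, 0 < τ → volume {x | τ < u x} < ⊤)
    (hvτ : ∀ τ : ℝ, 0 < τ → volume {x | τ < v x} < ⊤)
    (h : ∀ᵐ τ ∂(volume.restrict (Ioi (0 : ℝ))), RS G u v τ ≤ RR G {x | τ < u x} {x | τ < v x})
    {τ : ℝ} (hτ : 0 < τ) : RS G u v τ ≤ RR G {x | τ < u x} {x | τ < v x} := by
  have bm : ∀ (w : EuclideanSpace ℝ (Fin n) → ℝ), (∀ τ : ℝ, 0 < τ → volume {x | τ < w x} < ⊤) →
      ∀ s t : ℝ, 0 < s → s ≤ t →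
      Metric.ball (0 : EuclideanSpace ℝ (Fin n)) (schwarzRadius n {x | t < w x}) ⊆
      Metric.ball 0 (schwarzRadius n {x | s < w x}) := fun w hw s t hs hst =>
    Metric.ball_subset_ball (radius_mono (hw s hs).ne (measure_mono (lev_anti w hst)))
  have mono : ∀ (w : EuclideanSpace ℝ (Fin n) → ℝ), (∀ τ : ℝ, 0 < τ → volume {x | τ < w x} < ⊤) →
      Monotone fun k : ℕ => Metric.ball (0 : EuclideanSpace ℝ (Fin n))
        (schwarzRadius n {x | τ + 1 / ((k : ℝ) + 1) < w x}) := by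
    intro w hw a b hab
    have := Nat.one_div_le_one_div (α := ℝ) hab
    exact bm w hw _ _ (by positivity) (by linarith)
  rw [RS, ball_iUnion hn huτ hτ, ball_iUnion hn hvτ hτ, RR_iUnion hG (fun k => measurableSet_ball)
    (fun k => measurableSet_ball) (mono u huτ) (mono v hvτ)]
  refine iSup_le fun k => ?_
  have hp : (0 : ℝ) < 1 / ((k : ℝ) + 1) := by positivity
  obtain ⟨t, ht, h1⟩ : ∃ t ∈ Ioo τ (τ + 1 / ((k : ℝ) + 1)),
      RS G u v t ≤ RR G {x | t < u x} {x | t < v x} := by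
    have h' := (ae_restrict_iff' measurableSet_Ioi).1 h
    by_contra! hcon
    have : volume (Ioo τ (τ + 1 / ((k : ℝ) + 1))) = 0 := by
      refine measure_mono_null ?_ (ae_iff.1 h')
      intro t ht
      have h2 := hcon t ht
      simp only [mem_ofPred_eq]
      exact fun hh => absurd (hh (hτ.trans ht.1)) (not_le.2 h2)
    rw [Real.volume_Ioo, ENNReal.ofReal_eq_zero] at this
    linarith
  have ht0 : 0 < t := hτ.trans ht.1
  calc _ ≤ RS G u v t := RR_mono (bm u huτ _ _ ht0 ht.2.le) (bm v hvτ _ _ ht0 ht.2.le)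
    _ ≤ _ := h1
    _ ≤ _ := RR_mono (lev_anti u ht.1.le) (lev_anti v ht.1.le)

lemma vol_zero_of_essSup_le {u : EuclideanSpace ℝ (Fin n) → ℝ} {τ : ℝ} (hτ : 0 < τ)
    (h : essSup (fun x => ENNReal.ofReal (u x)) volume ≤ ENNReal.ofReal τ) :
    volume {x | τ < u x} = 0 := by
  have h1 : ∀ᵐ x, ENNReal.ofReal (u x) ≤ ENNReal.ofReal τ := by
    filter_upwards [ENNReal.ae_le_essSup (fun x => ENNReal.ofReal (u x))] with x hx
    exact hx.trans h
  refine measure_mono_null ?_ (ae_iff.1 h1)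
  intro x hx
  have hx' : τ < u x := hx
  simp only [mem_ofPred_eq, not_le]
  exact (ENNReal.ofReal_lt_ofReal_iff (hτ.trans hx')).2 hx'

lemma vol_ne_zero_of_lt_essSup {u : EuclideanSpace ℝ (Fin n) → ℝ} {τ : ℝ}
    (h : ENNReal.ofReal τ < essSup (fun x => ENNReal.ofReal (u x)) volume) :
    volume {x | τ < u x} ≠ 0 := by
  intro h0
  refine absurd h (not_lt.2 (essSup_le_of_ae_le _ ?_))
  have : ∀ᵐ x, ¬ τ < u x := by
    rw [ae_iff]; simpa using h0
  filter_upwards [this] with x hx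
  exact ENNReal.ofReal_le_ofReal (not_lt.1 hx)

lemma RR_zero {G : EuclideanSpace ℝ (Fin n) → ℝ≥0∞} (hG : Ker G)
    {U V : Set (EuclideanSpace ℝ (Fin n))} (hU : MeasurableSet U) (hV : MeasurableSet V)
    (h : volume U = 0 ∨ volume V = 0) : RR G U V = 0 := by
  rcases h with h | h
  · have := RR_le hG hU hV
    rw [h, zero_mul] at this
    exact le_antisymm this zero_le
  · have := RR_le hG hV hU
    rw [h, zero_mul] at this
    rw [RR_symm hG hU hV]
    exact le_antisymm this zero_le

end Riesz

theorem stmt_2 (n : ℕ) (hn : 1 ≤ n)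
    (g : EuclideanSpace ℝ (Fin n) → ℝ) (hgint : Integrable g) (hgnonneg : ∀ x, 0 ≤ g x)
    (g₀ : ℝ → ℝ) (hg₀ : StrictAntiOn g₀ (Set.Ioi 0)) (hgrad : ∀ x, g x = g₀ ‖x‖)
    (u v : EuclideanSpace ℝ (Fin n) → ℝ) (hu : Measurable u) (hv : Measurable v)
    (hu0 : ∀ x, 0 ≤ u x) (hv0 : ∀ x, 0 ≤ v x)
    (huτ : ∀ τ : ℝ, 0 < τ → volume {x | τ < u x} < ⊤)
    (hvτ : ∀ τ : ℝ, 0 < τ → volume {x | τ < v x} < ⊤)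
    (hfin : (∫⁻ x : EuclideanSpace ℝ (Fin n), ∫⁻ y : EuclideanSpace ℝ (Fin n),
        ENNReal.ofReal (|u x - v y| * g (x - y))) ≠ ⊤) :
    ((∫⁻ x : EuclideanSpace ℝ (Fin n), ∫⁻ y : EuclideanSpace ℝ (Fin n),
        ENNReal.ofReal (|schwarzRearr n u x - schwarzRearr n v y| * g (x - y))) =
      ∫⁻ x : EuclideanSpace ℝ (Fin n), ∫⁻ y : EuclideanSpace ℝ (Fin n),
        ENNReal.ofReal (|u x - v y| * g (x - y))) ↔
      ∀ τ : ℝ, 0 < τ →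
        ENNReal.ofReal τ <
          min (essSup (fun x => ENNReal.ofReal (u x)) volume)
            (essSup (fun x => ENNReal.ofReal (v x)) volume) →
        ∃ z : EuclideanSpace ℝ (Fin n),
          ({x | τ < u x} : Set (EuclideanSpace ℝ (Fin n))) =ᵐ[volume]
            {x | τ < schwarzRearr n u (x + z)} ∧
          ({y | τ < v y} : Set (EuclideanSpace ℝ (Fin n))) =ᵐ[volume]
            {y | τ < schwarzRearr n v (y + z)} := by
  have hG := Riesz.gk_ker hn hgint hgnonneg hg₀ hgrad
  have mus := Riesz.rearr_meas hn hu hu0 huτ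
  have mvs := Riesz.rearr_meas hn hv hv0 hvτ
  rw [Riesz.dbl hn hG hu hv hu0 hv0] at hfin ⊢
  rw [Riesz.dbl hn hG mus mvs (Riesz.rearr_nonneg u) (Riesz.rearr_nonneg v)]
  set G := Riesz.gk g with hGdef
  have mU := Riesz.lev_meas hu
  have mV := Riesz.lev_meas hv
  have hI : ∀ τ : ℝ, 0 < τ → (volume {x | τ < u x} + volume {x | τ < v x}) * ∫⁻ x, G x ≠ ⊤ :=
    fun τ hτ => ENNReal.mul_ne_top (ENNReal.add_ne_top.2 ⟨(huτ τ hτ).ne, (hvτ τ hτ).ne⟩) hG.fin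
  have id1 : ∀ τ : ℝ, 0 < τ → _ := fun τ hτ => Riesz.Phi_star hn hG hu hv hu0 hv0 huτ hvτ hτ
  have id2 := Riesz.Phi_RR hG hu hv
  have hR : ∀ τ : ℝ, 0 < τ → Riesz.RR G {x | τ < u x} {x | τ < v x} ≤ Riesz.RS G u v τ :=
    fun τ hτ => Riesz.riesz hn hG (mU τ) (mV τ) (huτ τ hτ).ne (hvτ τ hτ).ne
  have hRfin : ∀ τ : ℝ, 0 < τ → Riesz.RR G {x | τ < u x} {x | τ < v x} ≠ ⊤ :=
    fun τ hτ => Riesz.RR_ne_top hG (mU τ) (mV τ) (huτ τ hτ).ne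
  have hPhile : ∀ τ : ℝ, 0 < τ →
      Riesz.Phi G (schwarzRearr n u) (schwarzRearr n v) τ ≤ Riesz.Phi G u v τ := by
    intro τ hτ
    have h1 := id1 τ hτ
    rw [← id2 τ] at h1
    refine (ENNReal.add_le_add_iff_right
      (ENNReal.add_ne_top.2 ⟨hRfin τ hτ, hRfin τ hτ⟩)).1 (le_trans ?_ h1.le)
    gcongr <;> exact hR τ hτ
  constructor
  · intro heq τ hτ hlt
    have hae : Riesz.Phi G (schwarzRearr n u) (schwarzRearr n v)
        =ᵐ[volume.restrict (Set.Ioi (0 : ℝ))] Riesz.Phi G u v := by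
      refine ae_eq_of_ae_le_of_lintegral_le ?_ (heq ▸ hfin) (Riesz.Phi_meas hG hu hv).aemeasurable
        heq.ge
      exact (ae_restrict_iff' measurableSet_Ioi).2 (Filter.Eventually.of_forall fun τ hτ => hPhile τ hτ)
    have hopt : Riesz.RS G u v τ ≤ Riesz.RR G {x | τ < u x} {x | τ < v x} := by
      refine Riesz.RS_extend hn hG huτ hvτ ?_ hτ
      filter_upwards [hae, ae_restrict_mem measurableSet_Ioi] with t ht ht0
      have h1 := id1 t ht0
      have hne := hI t ht0
      rw [← id2 t, ht] at h1
      rw [← id2 t] at hne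
      have h2 := (ENNReal.add_right_inj (ENNReal.add_ne_top.1 hne).1).1 h1
      by_contra! hcon
      exact absurd h2 (ENNReal.add_lt_add hcon hcon).ne'
    obtain ⟨z, h1, h2⟩ := Riesz.riesz_eq hn hG (mU τ) (mV τ) (huτ τ hτ).ne (hvτ τ hτ).ne
      (Riesz.vol_ne_zero_of_lt_essSup (hlt.trans_le (min_le_left _ _)))
      (Riesz.vol_ne_zero_of_lt_essSup (hlt.trans_le (min_le_right _ _))) hopt
    have m := (measurePreserving_add_right
      (volume : Measure (EuclideanSpace ℝ (Fin n))) z).quasiMeasurePreserving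
    exact ⟨z, h1.trans (m.preimage_ae_eq (Riesz.rearr_lev hn hu hu0 huτ hτ)).symm,
      h2.trans (m.preimage_ae_eq (Riesz.rearr_lev hn hv hv0 hvτ hτ)).symm⟩
  · intro H
    refine setLIntegral_congr_fun measurableSet_Ioi fun τ hτ => ?_
    have hτ' : 0 < τ := hτ
    have key : Riesz.RS G u v τ = Riesz.RR G {x | τ < u x} {x | τ < v x} := by
      by_cases hlt : ENNReal.ofReal τ <
          min (essSup (fun x => ENNReal.ofReal (u x)) volume)
            (essSup (fun x => ENNReal.ofReal (v x)) volume)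
      · obtain ⟨z, h1, h2⟩ := H τ hτ' hlt
        have m := (measurePreserving_add_right
          (volume : Measure (EuclideanSpace ℝ (Fin n))) z).quasiMeasurePreserving
        have h1' := h1.trans (m.preimage_ae_eq (Riesz.rearr_lev hn hu hu0 huτ hτ'))
        have h2' := h2.trans (m.preimage_ae_eq (Riesz.rearr_lev hn hv hv0 hvτ hτ'))
        rw [Riesz.RR_congr h1' h2', Riesz.RR_trans hG measurableSet_ball measurableSet_ball]
        rfl
      · have h0 : volume {x | τ < u x} = 0 ∨ volume {x | τ < v x} = 0 := by
          rcases min_le_iff.1 (not_lt.1 hlt) with h | h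
          · exact Or.inl (Riesz.vol_zero_of_essSup_le hτ' h)
          · exact Or.inr (Riesz.vol_zero_of_essSup_le hτ' h)
        rw [Riesz.RR_zero hG (mU τ) (mV τ) h0]
        refine Riesz.RR_zero hG measurableSet_ball measurableSet_ball ?_
        rw [Riesz.radius_vol hn (huτ τ hτ').ne, Riesz.radius_vol hn (hvτ τ hτ').ne]
        exact h0
    have h1 := id1 τ hτ'
    rw [← id2 τ, key] at h1
    exact (ENNReal.add_left_inj (ENNReal.add_ne_top.2 ⟨hRfin τ hτ', hRfin τ hτ'⟩)).1 h1
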